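/- Let 1 < p < ∞, (Ω,Σ,μ) a probability space, and X a Banach space. Then X has property (δS_μ) if and only if every relatively weakly compact subset of L^p(μ,X) is a δS-set of L^p(μ,X). -/

import Mathlib

open MeasureTheory Filter Set ENNReal Pointwise

noncomputable section

def IsWeaklyCompact {X : Type*} [NormedAddCommGroup X] [NormedSpace ℝ X] (W : Set X) : Prop :=
  IsCompact (toWeakSpace ℝ X '' W)

def IsRelWeaklyCompact {X : Type*} [NormedAddCommGroup X] [NormedSpace ℝ X] (W : Set X) : Prop :=
  IsCompact (closure (toWeakSpace ℝ X '' W))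

variable {Ω : Type*} [MeasurableSpace Ω] {X : Type*} [NormedAddCommGroup X] [NormedSpace ℝ X]

/-- A set of functions in `L¹(μ,X)` is uniformly integrable if it is bounded and the integrals
of the norms over small sets are uniformly small. -/
def UnifIntegrableSet (μ : Measure Ω) (K : Set (Lp X 1 μ)) : Prop :=
  (∃ C : ℝ, ∀ f ∈ K, ‖f‖ ≤ C) ∧
  ∀ ε : ℝ, 0 < ε → ∃ δ : ℝ, 0 < δ ∧ ∀ f ∈ K, ∀ A : Set Ω, μ A ≤ ENNReal.ofReal δ →
    ∫ ω in A, ‖(f : Ω → X) ω‖ ∂μ ≤ ε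

/-- `K ⊆ L¹(μ,X)` is a δS-set if it is uniformly integrable and for every `δ > 0` there is a
weakly compact `W ⊆ X` with `μ (f ⁻¹' W) ≥ 1 - δ` for all `f ∈ K`. -/
def IsDeltaSSet (μ : Measure Ω) (K : Set (Lp X 1 μ)) : Prop :=
  UnifIntegrableSet μ K ∧
  ∀ δ : ℝ, 0 < δ → ∃ W : Set X, IsWeaklyCompact W ∧
    ∀ f ∈ K, 1 - ENNReal.ofReal δ ≤ μ ((f : Ω → X) ⁻¹' W)

/-- A Banach space `X` has property (δSμ) if every relatively weakly compact subset of
`L¹(μ,X)` is a δS-set. -/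
def DeltaSProp (μ : Measure Ω) (X : Type*) [NormedAddCommGroup X] [NormedSpace ℝ X] : Prop :=
  ∀ K : Set (Lp X 1 μ), IsRelWeaklyCompact K → IsDeltaSSet μ K

/-!
A weakly compact witness for the image of a set under the inclusion `L^p → L¹` is one for the set,
and the inclusion preserves relative weak compactness; this is one direction.

Conversely, suppose that relatively weakly compact sets of `L^p` are weakly tight, and let `K` be
relatively weakly compact in `L¹`. Uniform integrability of `K` follows from Baire's theorem on the
complete space of measurable fields of functionals in the dual ball. For tightness, let first `f n`
be a weakly null sequence in `L¹`. It factors through a real random variable. On an atom of the law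
of that variable it is a weakly null sequence of constants; where the law has no atoms, it is the
law of a pair consisting of a copy of the variable and an independent sequence of random signs
`ε n`. The functions `ε n • f n`, cut off at a constant, are weakly null in `L^p`: by Mazur's
theorem some convex combinations of the `f n` have small norm, and multiplying coefficients by the
signs and discarding the values beyond the cutoff does not spoil this on average. They are therefore
tight, and a symmetric weakly compact set does not see the signs.

Consequently every sequence in `K` has a weakly tight subsequence, its weak limit being a single
function. This passes to the set `A` of truncations of elements of `K` at height `R`. In `A`, the
sequences with values in a fixed weakly compact set have convex combinations that converge in norm
up to small errors, so `A` is relatively weakly compact in `L^p`, hence tight by hypothesis, and by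
Markov's inequality `A` differs from `K` only on small sets when `R` is large.
-/

open Topology

section WeakTopology

variable {Z Y α : Type*} [NormedAddCommGroup Z] [NormedSpace ℝ Z] [NormedAddCommGroup Y]
  [NormedSpace ℝ Y] {l : Filter α} {u : α → Z} {z : Z} {K L s : Set Z}

/-- Weak convergence of a family of vectors, tested on the dual rather than in `WeakSpace`. -/
def WeakTendsto (u : α → Z) (l : Filter α) (z : Z) : Prop :=
  ∀ φ : StrongDual ℝ Z, Tendsto (fun a => φ (u a)) l (𝓝 (φ z))

theorem tendsto_toWeakSpace_iff_weakTendsto :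
    Tendsto (fun a => toWeakSpace ℝ Z (u a)) l (𝓝 (toWeakSpace ℝ Z z)) ↔ WeakTendsto u l z := by
  have separates : Function.Injective (topDualPairing ℝ Z).flip := fun x y hxy =>
    (SeparatingDual.eq_iff_forall_dual_eq (R := ℝ)).2 fun φ => DFunLike.congr_fun hxy φ
  exact WeakBilin.tendsto_iff_forall_eval_tendsto _ separates

theorem weakTendsto_zero_iff :
    WeakTendsto u l 0 ↔ ∀ φ : StrongDual ℝ Z, Tendsto (fun a => φ (u a)) l (𝓝 0) := by
  simp only [WeakTendsto, map_zero]

theorem WeakTendsto.comp {β : Type*} {l' : Filter β} {ψ : β → α} (h : WeakTendsto u l z)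
    (hψ : Tendsto ψ l' l) : WeakTendsto (u ∘ ψ) l' z :=
  fun φ => (h φ).comp hψ

theorem WeakTendsto.map (h : WeakTendsto u l z) (T : Z →L[ℝ] Y) :
    WeakTendsto (fun a => T (u a)) l (T z) :=
  fun φ => h (φ.comp T)

theorem WeakTendsto.sub_const (h : WeakTendsto u l z) (y : Z) :
    WeakTendsto (fun a => u a - y) l (z - y) := fun φ => by
  simpa only [map_sub] using (h φ).sub_const (φ y)

theorem continuous_dual_toWeakSpace_symm (φ : StrongDual ℝ Z) :
    Continuous fun x : WeakSpace ℝ Z => φ ((toWeakSpace ℝ Z).symm x) :=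
  WeakBilin.eval_continuous (topDualPairing ℝ Z).flip φ

theorem isClosed_image_toWeakSpace (hs : Convex ℝ s) (hc : IsClosed s) :
    IsClosed (toWeakSpace ℝ Z '' s) := by
  rw [← hc.closure_eq, hs.toWeakSpace_closure ℝ]
  exact isClosed_closure

theorem WeakTendsto.mem_of_convex_of_isClosed [l.NeBot] (h : WeakTendsto u l z)
    (hs : Convex ℝ s) (hc : IsClosed s) (hu : ∀ᶠ a in l, u a ∈ s) : z ∈ s := by
  have hmem := (isClosed_image_toWeakSpace hs hc).mem_of_tendsto
    (tendsto_toWeakSpace_iff_weakTendsto.2 h) (hu.mono fun a ha => mem_image_of_mem _ ha)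
  exact (toWeakSpace ℝ Z).injective.mem_set_image.1 hmem

theorem WeakTendsto.mem_closure_convexHull {u : ℕ → Z} (h : WeakTendsto u atTop z) (n : ℕ) :
    z ∈ closure (convexHull ℝ (u '' Ici n)) :=
  h.mem_of_convex_of_isClosed (convex_convexHull ℝ _).closure isClosed_closure <|
    (eventually_ge_atTop n).mono fun _ hk =>
      subset_closure (subset_convexHull ℝ _ (mem_image_of_mem u hk))

theorem WeakTendsto.exists_mem_convexHull_norm_lt {u : ℕ → Z} (h : WeakTendsto u atTop 0)
    (n : ℕ) {ε : ℝ} (hε : 0 < ε) : ∃ y ∈ convexHull ℝ (u '' Ici n), ‖y‖ < ε := by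
  simpa using Metric.mem_closure_iff.1 (h.mem_closure_convexHull n) ε hε

theorem exists_subseq_le_of_not_tendsto_zero {r : ℕ → ℝ} (h : ¬ Tendsto r atTop (𝓝 0)) :
    ∃ c > 0, ∃ ψ : ℕ → ℕ, StrictMono ψ ∧ ((∀ n, c ≤ r (ψ n)) ∨ ∀ n, c ≤ -r (ψ n)) := by
  simp only [Metric.tendsto_nhds, dist_zero_right, Real.norm_eq_abs, not_forall,
    not_eventually, not_lt] at h
  obtain ⟨c, hc, hfreq⟩ := h
  simp only [le_abs, frequently_or_distrib] at hfreq
  rcases hfreq with hfreq | hfreq <;> obtain ⟨ψ, hψ, hle⟩ := extraction_of_frequently_atTop hfreq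
  exacts [⟨c, hc, ψ, hψ, .inl hle⟩, ⟨c, hc, ψ, hψ, .inr hle⟩]

theorem le_mul_norm_of_mem_convexHull {c : ℝ} {φ : StrongDual ℝ Z} (h : ∀ x ∈ s, c ≤ φ x)
    {y : Z} (hy : y ∈ convexHull ℝ s) : c ≤ ‖φ‖ * ‖y‖ :=
  (convexHull_min (t := {x | c ≤ φ x}) h (convex_halfSpace_ge φ.toLinearMap.isLinear c) hy).trans
    ((le_abs_self _).trans (φ.le_opNorm y))

theorem weakTendsto_zero_of_forall_subseq_convexHull {u : ℕ → Z}
    (h : ∀ ψ : ℕ → ℕ, StrictMono ψ → ∀ ε : ℝ, 0 < ε →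
      ∃ y ∈ convexHull ℝ (range (u ∘ ψ)), ‖y‖ < ε) : WeakTendsto u atTop 0 := by
  refine weakTendsto_zero_iff.2 fun φ => ?_
  by_contra hφ
  obtain ⟨c, hc, ψ, hψ, hle⟩ := exists_subseq_le_of_not_tendsto_zero hφ
  obtain ⟨y, hy, hyε⟩ := h ψ hψ (c / (‖φ‖ + 1)) (by positivity)
  have hcy : c ≤ ‖φ‖ * ‖y‖ := by
    rcases hle with hle | hle
    · exact le_mul_norm_of_mem_convexHull (forall_mem_range.2 hle) hy
    · simpa using le_mul_norm_of_mem_convexHull (φ := -φ) (forall_mem_range.2 hle) hy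
  rw [lt_div_iff₀ (by positivity)] at hyε
  nlinarith [norm_nonneg y]

theorem weakTendsto_zero_linearIsometry_comp_iff (T : Z →ₗᵢ[ℝ] Y) {u : ℕ → Z} :
    WeakTendsto (fun n => T (u n)) atTop 0 ↔ WeakTendsto u atTop 0 := by
  refine ⟨fun h => weakTendsto_zero_of_forall_subseq_convexHull fun ψ hψ ε hε => ?_,
    fun h => by simpa using h.map T.toContinuousLinearMap⟩
  obtain ⟨y, hy, hyε⟩ := (h.comp hψ.tendsto_atTop).exists_mem_convexHull_norm_lt 0 hε
  rw [show (fun n => T (u n)) ∘ ψ = T.toLinearMap ∘ (u ∘ ψ) from rfl, image_comp,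
    ← T.toLinearMap.image_convexHull] at hy
  obtain ⟨x, hx, rfl⟩ := hy
  exact ⟨x, convexHull_mono (image_subset_range _ _) hx, (T.norm_map x).symm.trans_lt hyε⟩

theorem WeakTendsto.isWeaklyCompact_insert_range {u : ℕ → Z} (h : WeakTendsto u atTop z) :
    IsWeaklyCompact (insert z (range u)) := by
  rw [IsWeaklyCompact, image_insert_eq, ← range_comp]
  exact (tendsto_toWeakSpace_iff_weakTendsto.2 h).isCompact_insert_range

theorem WeakTendsto.isRelWeaklyCompact_range {u : ℕ → Z} (h : WeakTendsto u atTop z) :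
    IsRelWeaklyCompact (range u) :=
  IsCompact.closure_of_subset h.isWeaklyCompact_insert_range (image_mono (subset_insert _ _))

theorem IsRelWeaklyCompact.exists_norm_le (hK : IsRelWeaklyCompact K) :
    ∃ C : ℝ, ∀ f ∈ K, ‖f‖ ≤ C := by
  have pointwise_bounded (φ : StrongDual ℝ Z) :
      ∃ C, ∀ f : K, ‖NormedSpace.inclusionInDoubleDual ℝ Z f φ‖ ≤ C := by
    obtain ⟨C, hC⟩ :=
      (hK.image (continuous_dual_toWeakSpace_symm φ)).isBounded.exists_norm_le
    exact ⟨C, fun f => hC _ ⟨_, subset_closure ⟨f, f.2, rfl⟩, rfl⟩⟩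
  obtain ⟨C, hC⟩ := banach_steinhaus pointwise_bounded
  exact ⟨C, fun f hf =>
    ((NormedSpace.inclusionInDoubleDualLi (E := Z) ℝ).norm_map f).symm.trans_le (hC ⟨f, hf⟩)⟩

theorem IsRelWeaklyCompact.image (hK : IsRelWeaklyCompact K) (T : Z →L[ℝ] Y) :
    IsRelWeaklyCompact (T '' K) := by
  refine (IsCompact.image hK (WeakSpace.map T).continuous).closure_of_subset ?_
  rintro _ ⟨_, ⟨x, hx, rfl⟩, rfl⟩
  exact ⟨_, subset_closure ⟨x, hx, rfl⟩, rfl⟩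

theorem IsWeaklyCompact.isRelWeaklyCompact (hK : IsWeaklyCompact K) : IsRelWeaklyCompact K :=
  IsCompact.closure hK

theorem IsWeaklyCompact.image (hK : IsWeaklyCompact K) (T : Z →L[ℝ] Y) :
    IsWeaklyCompact (T '' K) := by
  have h := IsCompact.image hK (WeakSpace.map T).continuous
  rw [image_image] at h
  rwa [IsWeaklyCompact, image_image]

theorem IsWeaklyCompact.isClosed (hK : IsWeaklyCompact K) : IsClosed K := by
  rw [← (toWeakSpace ℝ Z).injective.preimage_image K]
  exact (IsCompact.isClosed hK).preimage (toWeakSpaceCLM ℝ Z).continuous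

theorem IsWeaklyCompact.of_isClosed_convex_subset (hK : IsWeaklyCompact K) (hs : Convex ℝ s)
    (hc : IsClosed s) (hsK : s ⊆ K) : IsWeaklyCompact s :=
  IsCompact.of_isClosed_subset hK (isClosed_image_toWeakSpace hs hc) (image_mono hsK)

theorem IsWeaklyCompact.inter_right (hK : IsWeaklyCompact K) (hs : Convex ℝ s)
    (hc : IsClosed s) : IsWeaklyCompact (K ∩ s) := by
  rw [IsWeaklyCompact, image_inter (toWeakSpace ℝ Z).injective]
  exact IsCompact.inter_right hK (isClosed_image_toWeakSpace hs hc)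

theorem IsWeaklyCompact.union (hK : IsWeaklyCompact K) (hL : IsWeaklyCompact L) :
    IsWeaklyCompact (K ∪ L) := by
  rw [IsWeaklyCompact, image_union]
  exact IsCompact.union hK hL

theorem IsWeaklyCompact.add (hK : IsWeaklyCompact K) (hL : IsWeaklyCompact L) :
    IsWeaklyCompact (K + L) := by
  rw [IsWeaklyCompact, image_add]
  exact IsCompact.add hK hL

theorem isWeaklyCompact_of_isCompact (hK : IsCompact K) : IsWeaklyCompact K :=
  hK.image (toWeakSpaceCLM ℝ Z).continuous

theorem isWeaklyCompact_singleton (z : Z) : IsWeaklyCompact {z} :=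
  isWeaklyCompact_of_isCompact isCompact_singleton

theorem IsRelWeaklyCompact.exists_forall_mem_closure_convexHull {u : ℕ → Z}
    (hu : IsRelWeaklyCompact (range u)) : ∃ z, ∀ n, z ∈ closure (convexHull ℝ (u '' Ici n)) := by
  obtain ⟨z, -, hz⟩ := IsCompact.exists_mapClusterPt_of_frequently hu (l := atTop)
    (.of_forall fun n => subset_closure (mem_image_of_mem _ (mem_range_self n)))
  refine ⟨(toWeakSpace ℝ Z).symm z, fun n => ?_⟩
  have hclosed := isClosed_image_toWeakSpace (convex_convexHull ℝ (u '' Ici n)).closure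
    isClosed_closure
  have hmem := hclosed.mem_of_mapClusterPt hz <| (eventually_ge_atTop n).mono fun k hk =>
    mem_image_of_mem _ (subset_closure (subset_convexHull ℝ _ (mem_image_of_mem u hk)))
  obtain ⟨y, hy, rfl⟩ := hmem
  simpa using hy

end WeakTopology

section EberleinSmulian

open NormedSpace

variable {Z : Type*} [NormedAddCommGroup Z] [NormedSpace ℝ Z] {A : Set Z}

theorem exists_inclusionInDoubleDual_eq {η : StrongDual ℝ (StrongDual ℝ Z)} (s : Finset Z)
    (hη : ∀ φ : StrongDual ℝ Z, (∀ x ∈ s, φ x = 0) → η φ = 0) :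
    ∃ x, inclusionInDoubleDual ℝ Z x = η := by
  let J : Z →ₗ[ℝ] StrongDual ℝ Z →ₗ[ℝ] ℝ :=
    (ContinuousLinearMap.coeLM ℝ).comp (inclusionInDoubleDual ℝ Z).toLinearMap
  have mem_span : η.toLinearMap ∈ Submodule.span ℝ (range fun x : s => J x) :=
    mem_span_of_iInf_ker_le_ker fun φ hφ => hη φ fun x hx =>
      (Submodule.mem_iInf _).1 hφ ⟨x, hx⟩
  have span_le : Submodule.span ℝ (range fun x : s => J x) ≤ LinearMap.range J :=
    Submodule.span_le.2 (range_subset_iff.2 fun x => LinearMap.mem_range_self J x)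
  obtain ⟨x, hx⟩ := span_le mem_span
  exact ⟨x, ContinuousLinearMap.coe_injective hx⟩

theorem exists_dual_vanishing_lt_apply {ξ : StrongDual ℝ (StrongDual ℝ Z)} {c θ : ℝ}
    (hc : 0 ≤ c) (hcθ : c < θ) (hξ : ∀ x : Z, θ ≤ ‖ξ - inclusionInDoubleDual ℝ Z x‖)
    (s : Finset Z) :
    ∃ φ : StrongDual ℝ Z, ‖φ‖ ≤ 1 ∧ (∀ x ∈ s, φ x = 0) ∧ c < ξ φ := by
  by_contra! hle
  let N : Submodule ℝ (StrongDual ℝ Z) :=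
    ⨅ x ∈ s, LinearMap.ker (inclusionInDoubleDual ℝ Z x).toLinearMap
  have mem_N (φ : StrongDual ℝ Z) : φ ∈ N ↔ ∀ x ∈ s, φ x = 0 := by
    simp [N, Submodule.mem_iInf]
  obtain ⟨η, hηξ, hη⟩ := exists_extension_norm_eq N (ξ.comp N.subtypeL)
  have norm_η_le : ‖η‖ ≤ c := by
    refine hη.trans_le (ContinuousLinearMap.opNorm_le_of_unit_norm hc fun φ hφ =>
      (Real.norm_eq_abs _).trans_le (abs_le'.2 ⟨?_, ?_⟩))
    · exact hle φ hφ.le ((mem_N _).1 φ.2)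
    · simpa using hle (-φ) (by simpa using hφ.le) ((mem_N _).1 (-φ).2)
  obtain ⟨x, hx⟩ := exists_inclusionInDoubleDual_eq (η := ξ - η) s fun φ hφ => by
    simp [hηξ ⟨φ, (mem_N φ).2 hφ⟩]
  have hsub : ξ - inclusionInDoubleDual ℝ Z x = η := by
    rw [hx]
    ext φ
    simp
  exact hcθ.not_ge ((hξ x).trans (hsub ▸ norm_η_le))

theorem exists_mem_forall_abs_sub_lt {x : WeakDual ℝ (StrongDual ℝ Z)}
    (hx : x ∈ closure (inclusionInDoubleDualWeak ℝ Z '' (toWeakSpace ℝ Z '' A)))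
    (s : Finset (StrongDual ℝ Z)) {ε : ℝ} (hε : 0 < ε) :
    ∃ a ∈ A, ∀ φ ∈ s, |φ a - x φ| < ε := by
  have hopen : IsOpen (⋂ φ ∈ s, {y : WeakDual ℝ (StrongDual ℝ Z) | |y φ - x φ| < ε}) :=
    isOpen_biInter_finset fun φ _ => isOpen_lt
      ((WeakDual.eval_continuous φ).sub continuous_const).abs continuous_const
  obtain ⟨_, hy, _, ⟨a, ha, rfl⟩, rfl⟩ := mem_closure_iff.1 hx _ hopen (by simp [hε])
  exact ⟨a, ha, fun φ hφ => mem_iInter₂.1 hy φ hφ⟩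

theorem isRelWeaklyCompact_of_closure_subset_range (hb : ∃ C : ℝ, ∀ a ∈ A, ‖a‖ ≤ C)
    (h : closure (inclusionInDoubleDualWeak ℝ Z '' (toWeakSpace ℝ Z '' A)) ⊆
      range (inclusionInDoubleDualWeak ℝ Z)) : IsRelWeaklyCompact A := by
  refine isCompact_closure_of_isBounded ℝ Z _ ?_ h
  rw [(toWeakSpace ℝ Z).injective.preimage_image]
  exact isBounded_iff_forall_norm_le.2 hb

theorem exists_bidual_of_not_isRelWeaklyCompact [CompleteSpace Z]
    (hb : ∃ C : ℝ, ∀ a ∈ A, ‖a‖ ≤ C) (hA : ¬ IsRelWeaklyCompact A) :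
    ∃ ξ : StrongDual ℝ (StrongDual ℝ Z),
      (∃ θ > 0, ∀ x : Z, θ ≤ ‖ξ - inclusionInDoubleDual ℝ Z x‖) ∧
      ∀ (s : Finset (StrongDual ℝ Z)) (ε : ℝ), 0 < ε → ∃ a ∈ A, ∀ φ ∈ s, |φ a - ξ φ| < ε := by
  obtain ⟨x, hx, hx'⟩ := not_subset.1 (mt (isRelWeaklyCompact_of_closure_subset_range hb) hA)
  have hisometry : Isometry (inclusionInDoubleDual ℝ Z) :=
    (inclusionInDoubleDualLi (E := Z) ℝ).isometry
  have hclosed := hisometry.isClosedEmbedding.isClosed_range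
  have hmem : WeakDual.toStrongDual x ∉ range (inclusionInDoubleDual ℝ Z) := by
    rintro ⟨y, hy⟩
    exact hx' ⟨toWeakSpace ℝ Z y, WeakDual.toStrongDual.injective hy⟩
  refine ⟨WeakDual.toStrongDual x,
    ⟨_, (hclosed.notMem_iff_infDist_pos (range_nonempty _)).1 hmem, fun y => ?_⟩,
    fun s ε hε => exists_mem_forall_abs_sub_lt hx s hε⟩
  exact (Metric.infDist_le_dist_of_mem (mem_range_self y)).trans_eq (dist_eq_norm _ _)

/-- The biorthogonality pattern by which James characterizes the failure of relative weak
compactness: `φ j (a m)` is at least `c` on and above the diagonal and zero below it. -/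
structure IsTriangular (c : ℝ) (φ : ℕ → StrongDual ℝ Z) (a : ℕ → Z) : Prop where
  norm_le_one (j : ℕ) : ‖φ j‖ ≤ 1
  le_apply {j m : ℕ} (h : j ≤ m) : c ≤ φ j (a m)
  apply_eq_zero {j m : ℕ} (h : m < j) : φ j (a m) = 0

theorem exists_isTriangular_of_not_isRelWeaklyCompact [CompleteSpace Z]
    (hb : ∃ C : ℝ, ∀ a ∈ A, ‖a‖ ≤ C) (hA : ¬ IsRelWeaklyCompact A) :
    ∃ c > 0, ∃ (φ : ℕ → StrongDual ℝ Z) (a : ℕ → Z), (∀ n, a n ∈ A) ∧ IsTriangular c φ a := by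
  classical
  obtain ⟨ξ, ⟨θ, hθ, hξ⟩, happrox⟩ := exists_bidual_of_not_isRelWeaklyCompact hb hA
  obtain ⟨q, hq, hqr⟩ := exists_seq_of_forall_finset_exists
    (P := fun q : StrongDual ℝ Z × Z => q.2 ∈ A ∧ ‖q.1‖ ≤ 1 ∧ θ / 2 < ξ q.1 ∧ θ / 4 ≤ q.1 q.2)
    (r := fun q q' => q'.1 q.2 = 0 ∧ θ / 4 ≤ q.1 q'.2) fun s hs => by
      obtain ⟨φ, hφ, hφs, hξφ⟩ :=
        exists_dual_vanishing_lt_apply (half_pos hθ).le (half_lt_self hθ) hξ (s.image Prod.snd)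
      obtain ⟨a, ha, haφ⟩ := happrox (insert φ (s.image Prod.fst)) (θ / 4) (by positivity)
      have hle (ψ) (hψ : ψ ∈ insert φ (s.image Prod.fst)) (hξψ : θ / 2 < ξ ψ) :
          θ / 4 ≤ ψ a := by linarith [(abs_lt.1 (haφ ψ hψ)).1]
      exact ⟨(φ, a), ⟨ha, hφ, hξφ, hle φ (Finset.mem_insert_self _ _) hξφ⟩, fun q hqs =>
        ⟨hφs _ (Finset.mem_image_of_mem _ hqs),
          hle _ (Finset.mem_insert_of_mem (Finset.mem_image_of_mem _ hqs)) (hs q hqs).2.2.1⟩⟩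
  refine ⟨θ / 4, by positivity, fun n => (q n).1, fun n => (q n).2, fun n => (hq n).1,
    fun j => (hq j).2.1, fun {j m} h => ?_, fun h => (hqr _ _ h).1⟩
  rcases h.eq_or_lt with rfl | h
  exacts [(hq j).2.2.2, (hqr j m h).2]

namespace IsTriangular

variable {c : ℝ} {φ : ℕ → StrongDual ℝ Z} {a w : ℕ → Z} {ψ : ℕ → ℕ} {g : Z}

theorem abs_apply_sub_le (h : IsTriangular c φ a) (j : ℕ) (x y : Z) :
    |φ j x - φ j y| ≤ ‖x - y‖ := by
  rw [← map_sub]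
  simpa using (φ j).le_of_opNorm_le (h.norm_le_one j) (x - y)

theorem le_apply_of_mem_closure_convexHull (h : IsTriangular c φ a) (hψ : StrictMono ψ)
    (hw : ∀ n, ‖w n - a (ψ n)‖ ≤ c / 4) {j : ℕ}
    (hg : g ∈ closure (convexHull ℝ (w '' Ici j))) : 3 * c / 4 ≤ φ j g := by
  refine closure_minimal (convexHull_min (t := {z | 3 * c / 4 ≤ φ j z}) ?_ ?_) ?_ hg
  · rintro _ ⟨n, hn, rfl⟩
    have hclose := (abs_le.1 (h.abs_apply_sub_le j (w n) (a (ψ n)))).1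
    have hlarge := h.le_apply (le_trans hn hψ.le_apply)
    have : 3 * c / 4 ≤ φ j (w n) := by linarith [hw n]
    exact this
  · exact convex_halfSpace_ge (φ j).toLinearMap.isLinear _
  · exact isClosed_le continuous_const (φ j).continuous

theorem eventually_apply_le_of_mem_convexHull (h : IsTriangular c φ a)
    (hw : ∀ n, ‖w n - a (ψ n)‖ ≤ c / 4) {y : Z} (hy : y ∈ convexHull ℝ (range w)) :
    ∀ᶠ j in atTop, φ j y ≤ c / 4 := by
  refine convexHull_min (t := {z | ∀ᶠ j in atTop, φ j z ≤ c / 4}) ?_ ?_ hy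
  · rintro _ ⟨n, rfl⟩
    filter_upwards [eventually_gt_atTop (ψ n)] with j hj
    have hclose := (abs_le.1 (h.abs_apply_sub_le j (w n) (a (ψ n)))).2
    rw [h.apply_eq_zero hj, sub_zero] at hclose
    exact hclose.trans (hw n)
  · intro z hz z' hz' s t hs ht hst
    filter_upwards [hz, hz'] with j hj hj'
    exact convex_halfSpace_le (φ j).toLinearMap.isLinear _ hj hj' hs ht hst

theorem not_forall_mem_closure_convexHull (hc : 0 < c) (h : IsTriangular c φ a)
    (hψ : StrictMono ψ) (hw : ∀ n, ‖w n - a (ψ n)‖ ≤ c / 4) :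
    ¬ ∀ n, g ∈ closure (convexHull ℝ (w '' Ici n)) := by
  intro hg
  have hg₀ : g ∈ closure (convexHull ℝ (range w)) :=
    closure_mono (convexHull_mono (image_subset_range _ _)) (hg 0)
  obtain ⟨y, hy, hgy⟩ := Metric.mem_closure_iff.1 hg₀ (c / 4) (by positivity)
  obtain ⟨j, hj⟩ := (h.eventually_apply_le_of_mem_convexHull hw hy).exists
  have hlarge := h.le_apply_of_mem_closure_convexHull hψ hw (hg j)
  have hclose := (abs_le.1 (h.abs_apply_sub_le j g y)).2
  rw [dist_eq_norm] at hgy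
  linarith

end IsTriangular

/-- The sufficiency half of the Eberlein–Šmulian theorem, weakened in two ways: subsequences may
be perturbed uniformly by `ε`, and convex combinations replace weak limits. -/
theorem isRelWeaklyCompact_of_forall_seq [CompleteSpace Z] (hb : ∃ C : ℝ, ∀ a ∈ A, ‖a‖ ≤ C)
    (h : ∀ u : ℕ → Z, (∀ n, u n ∈ A) → ∀ ε : ℝ, 0 < ε → ∃ ψ : ℕ → ℕ, StrictMono ψ ∧
      ∃ w : ℕ → Z, (∀ n, ‖w n - u (ψ n)‖ ≤ ε) ∧
        ∃ g : Z, ∀ n, g ∈ closure (convexHull ℝ (w '' Ici n))) :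
    IsRelWeaklyCompact A := by
  by_contra hA
  obtain ⟨c, hc, φ, a, haA, htri⟩ := exists_isTriangular_of_not_isRelWeaklyCompact hb hA
  obtain ⟨ψ, hψ, w, hw, g, hg⟩ := h a haA (c / 4) (by positivity)
  exact htri.not_forall_mem_closure_convexHull hc hψ hw hg

end EberleinSmulian

section Hilbert

variable {H : Type*} [NormedAddCommGroup H] [InnerProductSpace ℝ H] [CompleteSpace H]

theorem surjective_inclusionInDoubleDual_of_innerProductSpace :
    Function.Surjective (NormedSpace.inclusionInDoubleDual ℝ H) := fun ξ => by
  let dual := InnerProductSpace.toDual ℝ H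
  refine ⟨dual.symm (ξ.comp dual.toContinuousLinearEquiv.toContinuousLinearMap), ?_⟩
  ext φ
  obtain ⟨x, rfl⟩ := dual.surjective φ
  rw [NormedSpace.dual_def, InnerProductSpace.toDual_apply_apply, real_inner_comm,
    ← InnerProductSpace.toDual_apply_apply, LinearIsometryEquiv.apply_symm_apply]
  rfl

theorem isRelWeaklyCompact_of_bounded {s : Set H} (hs : ∃ C : ℝ, ∀ x ∈ s, ‖x‖ ≤ C) :
    IsRelWeaklyCompact s := by
  refine isRelWeaklyCompact_of_closure_subset_range hs fun ξ _ => ?_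
  obtain ⟨x, hx⟩ :=
    surjective_inclusionInDoubleDual_of_innerProductSpace (WeakDual.toStrongDual ξ)
  exact ⟨toWeakSpace ℝ H x, WeakDual.toStrongDual.injective hx⟩

theorem exists_tendsto_mem_convexHull_tail {u : ℕ → H} (hu : ∃ C : ℝ, ∀ n, ‖u n‖ ≤ C) :
    ∃ (v : ℕ → H) (z : H), (∀ n, v n ∈ convexHull ℝ (u '' Ici n)) ∧ Tendsto v atTop (𝓝 z) := by
  obtain ⟨z, hz⟩ := (isRelWeaklyCompact_of_bounded (s := range u)
    (by simpa using hu)).exists_forall_mem_closure_convexHull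
  choose v hv hvz using fun n : ℕ =>
    Metric.mem_closure_iff.1 (hz n) (1 / (n + 1 : ℝ)) Nat.one_div_pos_of_nat
  refine ⟨v, z, hv, tendsto_iff_dist_tendsto_zero.2 ?_⟩
  exact squeeze_zero (fun _ => dist_nonneg) (fun n => (dist_comm _ _).trans_le (hvz n).le)
    tendsto_one_div_add_atTop_nhds_zero_nat

end Hilbert

section Norming

variable {ι Z : Type*} [NormedAddCommGroup Z] [NormedSpace ℝ Z]

/-- A family `φ` of functionals in the dual unit ball is norming for `s` if
`‖x‖ = ⨆ i, φ i x` for all `x ∈ s`. Countable norming families reduce questions about the weak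
topology to sequences of scalars. -/
structure IsNorming (φ : ι → StrongDual ℝ Z) (s : Set Z) : Prop where
  norm_le_one : ∀ i, ‖φ i‖ ≤ 1
  exists_sub_le : ∀ x ∈ s, ∀ ε : ℝ, 0 < ε → ∃ i, ‖x‖ - ε ≤ φ i x

theorem exists_isNorming {s : Set Z} (hs : TopologicalSpace.IsSeparable s) :
    ∃ φ : ℕ → StrongDual ℝ Z, IsNorming φ s := by
  rcases s.eq_empty_or_nonempty with rfl | hne
  · exact ⟨0, by simp, by simp⟩
  obtain ⟨c, hc, hsc⟩ := hs
  obtain ⟨d, rfl⟩ := hc.exists_eq_range (closure_nonempty_iff.1 (hne.mono hsc))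
  choose φ hφ_le hφ_eq using fun i => exists_dual_vector'' ℝ (d i)
  refine ⟨φ, hφ_le, fun x hx ε hε => ?_⟩
  obtain ⟨_, ⟨i, rfl⟩, hi⟩ := Metric.mem_closure_iff.1 (hsc hx) (ε / 2) (half_pos hε)
  rw [dist_eq_norm] at hi
  have apply_sub_le : φ i (d i - x) ≤ ‖x - d i‖ := by
    rw [norm_sub_rev]
    exact (le_abs_self _).trans (by simpa using (φ i).le_of_opNorm_le (hφ_le i) (d i - x))
  rw [map_sub, hφ_eq, RCLike.ofReal_real_eq_id, id_eq] at apply_sub_le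
  exact ⟨i, by linarith [norm_sub_norm_le x (d i)]⟩

variable {φ : ι → StrongDual ℝ Z}

theorem IsNorming.norm_le_iff {s : Set Z} (hφ : IsNorming φ s) {x : Z} (hx : x ∈ s) {r : ℝ} :
    ‖x‖ ≤ r ↔ ∀ i, φ i x ≤ r := by
  refine ⟨fun h i => ?_, fun h => le_of_forall_pos_le_add fun ε hε => ?_⟩
  · simpa using (le_abs_self _).trans ((φ i).le_of_opNorm_le_of_le (hφ.norm_le_one i) h)
  · obtain ⟨i, hi⟩ := hφ.exists_sub_le x hx ε hε
    linarith [h i]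

variable {M : Submodule ℝ Z}

theorem IsNorming.eq_of_forall_apply_eq (hφ : IsNorming φ M) {x y : Z} (hx : x ∈ M)
    (hy : y ∈ M) (hxy : ∀ i, φ i x = φ i y) : x = y := by
  rw [← sub_eq_zero, ← norm_le_zero_iff, hφ.norm_le_iff (M.sub_mem hx hy)]
  simp [hxy]

theorem IsNorming.isClosedEmbedding (hφ : IsNorming φ M) {S : Set (WeakSpace ℝ Z)}
    (hS : IsCompact S) (hSM : S ⊆ toWeakSpace ℝ Z '' M) :
    IsClosedEmbedding fun (x : S) (i : ι) => φ i ((toWeakSpace ℝ Z).symm x) := by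
  have := isCompact_iff_compactSpace.1 hS
  refine Continuous.isClosedEmbedding (continuous_pi fun i =>
    (continuous_dual_toWeakSpace_symm (φ i)).comp continuous_subtype_val) ?_
  rintro ⟨x, hx⟩ ⟨y, hy⟩ hxy
  obtain ⟨x', hx', rfl⟩ := hSM hx
  obtain ⟨y', hy', rfl⟩ := hSM hy
  obtain rfl := hφ.eq_of_forall_apply_eq hx' hy' (congrFun hxy)
  rfl

theorem isSeparable_topologicalClosure_span {s : Set Z} (hs : TopologicalSpace.IsSeparable s) :
    TopologicalSpace.IsSeparable ((Submodule.span ℝ s).topologicalClosure : Set Z) := by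
  rw [Submodule.topologicalClosure_coe]
  exact (hs.span (R := ℝ)).closure

theorem subset_topologicalClosure_span (s : Set Z) :
    s ⊆ (Submodule.span ℝ s).topologicalClosure :=
  Submodule.subset_span.trans (Submodule.le_topologicalClosure _)

theorem IsRelWeaklyCompact.exists_subseq {K : Set Z} (hK : IsRelWeaklyCompact K) {u : ℕ → Z}
    (hu : ∀ n, u n ∈ K) :
    ∃ ψ : ℕ → ℕ, StrictMono ψ ∧ ∃ z, WeakTendsto (u ∘ ψ) atTop z := by
  let M := (Submodule.span ℝ (range u)).topologicalClosure
  have huM (n) : u n ∈ M := subset_topologicalClosure_span _ (mem_range_self n)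
  obtain ⟨φ, hφ⟩ :=
    exists_isNorming (isSeparable_topologicalClosure_span (countable_range u).isSeparable)
  let S := closure (toWeakSpace ℝ Z '' K) ∩ toWeakSpace ℝ Z '' M
  have hS : IsCompact S := IsCompact.inter_right hK
    (isClosed_image_toWeakSpace M.convex (Submodule.isClosed_topologicalClosure _))
  have := isCompact_iff_compactSpace.1 hS
  have : TopologicalSpace.MetrizableSpace S :=
    (hφ.isClosedEmbedding hS inter_subset_right).isEmbedding.metrizableSpace
  obtain ⟨z, ψ, hψ, hlim⟩ := CompactSpace.tendsto_subseq fun n =>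
    (⟨toWeakSpace ℝ Z (u n), subset_closure ⟨_, hu n, rfl⟩, ⟨_, huM n, rfl⟩⟩ : S)
  exact ⟨ψ, hψ, (toWeakSpace ℝ Z).symm z,
    tendsto_toWeakSpace_iff_weakTendsto.1 ((continuous_subtype_val.tendsto _).comp hlim)⟩

theorem IsNorming.exists_mem_weakTendsto (hφ : IsNorming φ M) {W : Set Z}
    (hW : IsWeaklyCompact W) (hWM : W ⊆ M) {α : Type*} {l : Filter α} [l.NeBot] {u : α → Z}
    (hu : ∀ a, u a ∈ W) (hlim : ∀ i, ∃ c, Tendsto (fun a => φ i (u a)) l (𝓝 c)) :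
    ∃ x ∈ W, WeakTendsto u l x := by
  have hemb := hφ.isClosedEmbedding hW (image_mono hWM)
  choose c hc using hlim
  let s (a : α) : toWeakSpace ℝ Z '' W := ⟨toWeakSpace ℝ Z (u a), u a, hu a, rfl⟩
  have hlim_pi : Tendsto (fun a i => φ i ((toWeakSpace ℝ Z).symm (s a))) l (𝓝 c) :=
    tendsto_pi_nhds.2 hc
  obtain ⟨x, rfl⟩ := hemb.isClosed_range.mem_of_tendsto hlim_pi
    (Eventually.of_forall fun a => mem_range_self (s a))
  obtain ⟨_, w, hw, rfl⟩ := x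
  exact ⟨w, hw, tendsto_toWeakSpace_iff_weakTendsto.1 <|
    (continuous_subtype_val.tendsto _).comp (hemb.isEmbedding.tendsto_nhds_iff.2 hlim_pi)⟩

end Norming

section Pettis

theorem stronglyMeasurable_of_measurable_dist {α Z : Type*} [MeasurableSpace α]
    [PseudoMetricSpace Z] {f : α → Z} {s : Set Z} (hs : TopologicalSpace.IsSeparable s)
    (hf : ∀ a, f a ∈ s) (h : ∀ x ∈ s, Measurable fun a => dist (f a) x) :
    StronglyMeasurable f := by
  have := hs.secondCountableTopology
  borelize ↥s
  have balls_basis : TopologicalSpace.IsTopologicalBasis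
      (range fun q : s × {r : ℝ // 0 < r} => Metric.ball q.1 (q.2 : ℝ)) := by
    refine TopologicalSpace.isTopologicalBasis_of_isOpen_of_nhds ?_ fun x U hx hU => ?_
    · rintro _ ⟨q, rfl⟩
      exact Metric.isOpen_ball
    · obtain ⟨r, hr, hball⟩ := Metric.isOpen_iff.1 hU x hx
      exact ⟨_, ⟨(x, ⟨r, hr⟩), rfl⟩, Metric.mem_ball_self hr, hball⟩
  have measurable_codRestrict : Measurable (codRestrict f s hf) := by
    refine Measurable.of_le_map (balls_basis.borel_eq_generateFrom.trans_le ?_)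
    refine MeasurableSpace.generateFrom_le ?_
    rintro _ ⟨q, rfl⟩
    exact h q.1 q.1.2 measurableSet_Iio
  exact continuous_subtype_val.comp_stronglyMeasurable measurable_codRestrict.stronglyMeasurable

variable {α ι Z : Type*} [MeasurableSpace α] [Countable ι] [NormedAddCommGroup Z]
  [NormedSpace ℝ Z] {φ : ι → StrongDual ℝ Z} {M : Submodule ℝ Z} {f : α → Z}

theorem IsNorming.stronglyMeasurable (hφ : IsNorming φ M)
    (hM : TopologicalSpace.IsSeparable (M : Set Z)) (hfM : ∀ a, f a ∈ M)
    (hf : ∀ i, Measurable fun a => φ i (f a)) : StronglyMeasurable f := by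
  refine stronglyMeasurable_of_measurable_dist hM hfM fun x hx => measurable_of_Iic fun r => ?_
  have preimage_eq : (fun a => dist (f a) x) ⁻¹' Iic r = ⋂ i, {a | φ i (f a) - φ i x ≤ r} := by
    ext a
    simp [dist_eq_norm, hφ.norm_le_iff (M.sub_mem (hfM a) hx)]
  rw [preimage_eq]
  exact .iInter fun i => measurableSet_le ((hf i).sub_const _) measurable_const

end Pettis

section KreinSmulian

variable {S Z : Type*} [MeasurableSpace S] [NormedAddCommGroup Z] [NormedSpace ℝ Z] {τ : S → Z}

theorem continuous_toWeakSpace_integral [CompleteSpace Z] [TopologicalSpace S] [CompactSpace S]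
    [OpensMeasurableSpace S] (integrable : ∀ m : ProbabilityMeasure S, Integrable τ m)
    (hτ : ∀ ψ : StrongDual ℝ Z, Continuous fun x => ψ (τ x)) :
    Continuous fun m : ProbabilityMeasure S => toWeakSpace ℝ Z (∫ x, τ x ∂m) := by
  refine continuous_iff_continuousAt.2 fun m => tendsto_toWeakSpace_iff_weakTendsto.2 fun ψ => ?_
  have apply_integral (m : ProbabilityMeasure S) : ψ (∫ x, τ x ∂m) = ∫ x, ψ (τ x) ∂m :=
    (ψ.integral_comp_comm (integrable m)).symm
  simp only [apply_integral]
  exact (ProbabilityMeasure.continuous_integral_continuousMap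
    (⟨fun x => ψ (τ x), hτ ψ⟩ : C(S, ℝ))).tendsto m

theorem convex_range_integral_probabilityMeasure
    (integrable : ∀ m : ProbabilityMeasure S, Integrable τ m) :
    Convex ℝ (range fun m : ProbabilityMeasure S => ∫ x, τ x ∂m) := by
  rintro _ ⟨m, rfl⟩ _ ⟨m', rfl⟩ s t hs ht hst
  refine ⟨⟨ENNReal.ofReal s • (m : Measure S) + ENNReal.ofReal t • (m' : Measure S), ⟨?_⟩⟩, ?_⟩
  · simp [← ENNReal.ofReal_add hs ht, hst]
  · change ∫ x, τ x ∂(ENNReal.ofReal s • (m : Measure S) + ENNReal.ofReal t • (m' : Measure S)) = _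
    rw [integral_add_measure ((integrable m).smul_measure ofReal_ne_top)
      ((integrable m').smul_measure ofReal_ne_top), integral_smul_measure, integral_smul_measure,
      ENNReal.toReal_ofReal hs, ENNReal.toReal_ofReal ht]

-- Krein–Šmulian: the barycenters of the probability measures on `W` form a weakly compact convex
-- set containing `W`.
theorem IsWeaklyCompact.closure_convexHull [CompleteSpace Z] {W : Set Z}
    (hW : IsWeaklyCompact W) (hs : TopologicalSpace.IsSeparable W) :
    IsWeaklyCompact (closure (convexHull ℝ W)) := by
  have hM := isSeparable_topologicalClosure_span hs
  have hWM := subset_topologicalClosure_span W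
  obtain ⟨φ, hφ⟩ := exists_isNorming hM
  let S := toWeakSpace ℝ Z '' W
  have := isCompact_iff_compactSpace.1 (show IsCompact S from hW)
  have : TopologicalSpace.MetrizableSpace S :=
    (hφ.isClosedEmbedding hW (image_mono hWM)).isEmbedding.metrizableSpace
  borelize ↥S
  let τ (x : S) : Z := (toWeakSpace ℝ Z).symm x
  have hτW (x) : τ x ∈ W := by
    obtain ⟨_, w, hw, rfl⟩ := x
    exact hw
  have hτ (ψ : StrongDual ℝ Z) : Continuous fun x => ψ (τ x) :=
    (continuous_dual_toWeakSpace_symm ψ).comp continuous_subtype_val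
  have hτm : StronglyMeasurable τ :=
    hφ.stronglyMeasurable hM (fun x => hWM (hτW x)) fun i => (hτ (φ i)).measurable
  obtain ⟨C, hC⟩ := hW.isRelWeaklyCompact.exists_norm_le
  have integrable (m : ProbabilityMeasure S) : Integrable τ m :=
    .of_bound hτm.aestronglyMeasurable C (ae_of_all _ fun x => hC _ (hτW x))
  have barycenters_compact :
      IsWeaklyCompact (range fun m : ProbabilityMeasure S => ∫ x, τ x ∂m) := by
    rw [IsWeaklyCompact, ← range_comp]
    exact isCompact_range (continuous_toWeakSpace_integral integrable hτ)
  have W_subset : W ⊆ range fun m : ProbabilityMeasure S => ∫ x, τ x ∂m := fun w hw =>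
    ⟨⟨Measure.dirac ⟨toWeakSpace ℝ Z w, w, hw, rfl⟩, inferInstance⟩, integral_dirac _ _⟩
  exact barycenters_compact.of_isClosed_convex_subset (convex_convexHull ℝ W).closure
    isClosed_closure <| closure_minimal
      (convexHull_min W_subset (convex_range_integral_probabilityMeasure integrable))
      barycenters_compact.isClosed

end KreinSmulian

theorem ae_mem_of_mem_convexHull {μ : Measure Ω} {p : ℝ≥0∞} {S : Set (Lp X p μ)} {V : Set X}
    (hV : Convex ℝ V) (hS : ∀ f ∈ S, ∀ᵐ ω ∂μ, f ω ∈ V) {f : Lp X p μ}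
    (hf : f ∈ convexHull ℝ S) : ∀ᵐ ω ∂μ, f ω ∈ V := by
  refine convexHull_min (t := {f : Lp X p μ | ∀ᵐ ω ∂μ, f ω ∈ V}) hS ?_ hf
  intro f hf g hg a b ha hb hab
  filter_upwards [hf, hg, Lp.coeFn_add (a • f) (b • g), Lp.coeFn_smul a f, Lp.coeFn_smul b g]
    with ω hfω hgω hadd hsmul_f hsmul_g
  rw [hadd, Pi.add_apply, hsmul_f, hsmul_g]
  exact hV hfω hgω ha hb hab

section LpInclusion

variable {μ : Measure Ω} [IsFiniteMeasure μ] {p q : ℝ≥0∞} [Fact (1 ≤ p)] [Fact (1 ≤ q)]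

/-- The inclusion `L^p(μ,X) → L^q(μ,X)` over a finite measure, for `q ≤ p`. -/
def lpInclusion (h : q ≤ p) : Lp X p μ →L[ℝ] Lp X q μ :=
  LinearMap.mkContinuous
    { toFun f := ⟨f.1, Lp.antitone h f.2⟩
      map_add' _ _ := rfl
      map_smul' _ _ := rfl }
    (μ univ ^ (1 / q.toReal - 1 / p.toReal)).toReal fun f => by
      rw [mul_comm, Lp.norm_def, Lp.norm_def, ← ENNReal.toReal_mul]
      have exponent_nonneg : 0 ≤ 1 / q.toReal - 1 / p.toReal := by
        have hq : 0 < q := zero_lt_one.trans_le Fact.out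
        simpa [ENNReal.toReal_inv] using ENNReal.toReal_mono (ENNReal.inv_ne_top.2 hq.ne')
          (ENNReal.inv_le_inv.2 h)
      exact ENNReal.toReal_mono (by finiteness)
        (eLpNorm_le_eLpNorm_mul_rpow_measure_univ h (Lp.aestronglyMeasurable f))

theorem coeFn_lpInclusion (h : q ≤ p) (f : Lp X p μ) : (lpInclusion h f : Ω → X) = f := rfl

theorem convexHull_lpInclusion_image {ι : Type*} (h : q ≤ p) (u : ι → Lp X p μ) (s : Set ι) :
    convexHull ℝ ((fun i => lpInclusion h (u i)) '' s) =
      lpInclusion h '' convexHull ℝ (u '' s) := by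
  rw [← image_image (lpInclusion h)]
  exact ((lpInclusion h).toLinearMap.image_convexHull _).symm

theorem ae_norm_coeFn_le_norm {E : Type*} [NormedAddCommGroup E] {μ : Measure Ω} (f : Lp E ∞ μ) :
    ∀ᵐ ω ∂μ, ‖f ω‖ ≤ ‖f‖ := by
  rw [Lp.norm_def, toReal_eLpNorm (Lp.aestronglyMeasurable f)]
  exact ae_le_lpNorm_exponent_top (Lp.memLp f)

theorem norm_le_of_ae_norm_coeFn_le {E : Type*} [NormedAddCommGroup E] {μ : Measure Ω}
    {f : Lp E ∞ μ} {C : ℝ} (hC : 0 ≤ C) (h : ∀ᵐ ω ∂μ, ‖f ω‖ ≤ C) : ‖f‖ ≤ C := by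
  rw [Lp.norm_def, eLpNorm_exponent_top]
  exact ENNReal.toReal_le_of_le_ofReal hC (eLpNormEssSup_le_of_ae_bound h)

theorem norm_lpInclusion_top_rpow_le (hp : p ≠ ∞) (f : Lp X ∞ μ) :
    ‖(lpInclusion le_top f : Lp X p μ)‖ ^ p.toReal ≤
      ‖f‖ ^ (p.toReal - 1) * ‖(lpInclusion le_top f : Lp X 1 μ)‖ := by
  have hp0 : p ≠ 0 := (zero_lt_one.trans_le Fact.out).ne'
  have one_le : 1 ≤ p.toReal := by
    simpa using ENNReal.toReal_mono hp (Fact.out : 1 ≤ p)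
  have hfp : MemLp f p μ := (Lp.memLp f).mono_exponent le_top
  have hf1 : Integrable f μ := memLp_one_iff_integrable.1 ((Lp.memLp f).mono_exponent le_top)
  rw [L1.norm_eq_integral_norm, Lp.norm_def, coeFn_lpInclusion, coeFn_lpInclusion,
    hfp.eLpNorm_eq_integral_rpow_norm hp0 hp, ENNReal.toReal_ofReal (by positivity),
    Real.rpow_inv_rpow (by positivity) (by positivity), ← integral_const_mul]
  refine integral_mono_of_nonneg (ae_of_all _ fun ω => by positivity) (hf1.norm.const_mul _) ?_
  filter_upwards [ae_norm_coeFn_le_norm f] with ω hω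
  calc ‖f ω‖ ^ p.toReal = ‖f ω‖ ^ (p.toReal - 1) * ‖f ω‖ := by
        rw [← Real.rpow_add_one' (norm_nonneg _) (by linarith), sub_add_cancel]
    _ ≤ ‖f‖ ^ (p.toReal - 1) * ‖f ω‖ := by gcongr

theorem exists_norm_lpInclusion_top_lt (hp : p ≠ ∞) (C : ℝ) {ε : ℝ} (hε : 0 < ε) :
    ∃ η : ℝ, 0 < η ∧ ∀ f : Lp X ∞ μ, ‖f‖ ≤ C → ‖(lpInclusion le_top f : Lp X 1 μ)‖ < η →
      ‖(lpInclusion le_top f : Lp X p μ)‖ < ε := by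
  have one_le : 1 ≤ p.toReal := by
    simpa using ENNReal.toReal_mono hp (Fact.out : 1 ≤ p)
  have hD : 0 < max C 1 ^ (p.toReal - 1) := Real.rpow_pos_of_pos (lt_max_of_lt_right one_pos) _
  refine ⟨ε ^ p.toReal / max C 1 ^ (p.toReal - 1), by positivity, fun f hfC hfη => ?_⟩
  rw [lt_div_iff₀' hD] at hfη
  refine (Real.rpow_lt_rpow_iff (norm_nonneg _) hε.le (zero_lt_one.trans_le one_le)).1 ?_
  calc _ ≤ ‖f‖ ^ (p.toReal - 1) * ‖(lpInclusion le_top f : Lp X 1 μ)‖ :=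
        norm_lpInclusion_top_rpow_le hp f
    _ ≤ max C 1 ^ (p.toReal - 1) * ‖(lpInclusion le_top f : Lp X 1 μ)‖ := by
        gcongr
        · exact hfC.trans (le_max_left _ _)
    _ < ε ^ p.toReal := hfη

theorem exists_measure_le_norm_le {E : Type*} [NormedAddCommGroup E] {μ : Measure Ω} (C : ℝ)
    {δ : ℝ≥0∞} (hδ : 0 < δ) :
    ∃ R : ℝ, 0 < R ∧ ∀ f : Lp E 1 μ, ‖f‖ ≤ C → μ {ω | R ≤ ‖f ω‖} ≤ δ := by
  have tendsto_bound : Tendsto (fun R : ℝ => ENNReal.ofReal (C / R)) atTop (𝓝 0) := by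
    simpa using ENNReal.tendsto_ofReal (tendsto_const_nhds.div_atTop tendsto_id)
  obtain ⟨R, hRδ, hR⟩ :=
    ((tendsto_bound.eventually_le_const hδ).and (eventually_gt_atTop 0)).exists
  refine ⟨R, hR, fun f hf => le_trans ?_ hRδ⟩
  have markov := mul_meas_ge_le_integral_of_nonneg (ae_of_all μ fun ω => norm_nonneg (f ω))
    (L1.integrable_coeFn f).norm R
  rw [← L1.norm_eq_integral_norm] at markov
  rw [← ofReal_measureReal ((L1.integrable_coeFn f).measure_norm_ge_lt_top hR).ne]
  exact ENNReal.ofReal_le_ofReal ((le_div_iff₀' hR).2 (markov.trans hf))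

end LpInclusion

section Representation

theorem exists_countable_dense_addSubgroup (Z : Type*) [NormedAddCommGroup Z]
    [TopologicalSpace.SeparableSpace Z] :
    ∃ D : AddSubgroup Z, (D : Set Z).Countable ∧ Dense (D : Set Z) := by
  obtain ⟨c, hc, hcd⟩ := TopologicalSpace.exists_countable_dense Z
  have : Countable c := hc
  refine ⟨(LinearMap.range (Finsupp.linearCombination ℤ (Subtype.val : c → Z))).toAddSubgroup,
    countable_range _, hcd.mono fun x hx => ⟨Finsupp.single ⟨x, hx⟩ 1, by simp⟩⟩

theorem exists_strongDual_eqOn_of_dense {D : AddSubgroup X} (hD : Dense (D : Set X)) {C : ℝ}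
    (hC : 0 ≤ C) (γ : D →+ ℝ) (hγ : ∀ x, |γ x| ≤ C * ‖(x : X)‖) :
    ∃ G : StrongDual ℝ X, ‖G‖ ≤ C ∧ ∀ x : D, G x = γ x := by
  let f : D →L[ℤ] ℝ := ⟨γ.toIntLinearMap, AddMonoidHomClass.continuous_of_bound γ C hγ⟩
  let e : D →L[ℤ] X := ⟨D.subtype.toIntLinearMap, continuous_subtype_val⟩
  have denseRange_e : DenseRange e := by
    simpa only [DenseRange, show range e = D from Subtype.range_coe] using hD
  have extend_eq : ∀ x : D, f.extend e x = γ x :=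
    fun x => f.extend_eq denseRange_e isUniformEmbedding_subtype_val.isUniformInducing x
  let G : StrongDual ℝ X :=
    (f.extend e).toLinearMap.toAddMonoidHom.toRealLinearMap (f.extend e).continuous
  refine ⟨G, G.opNorm_le_bound hC fun x => ?_, extend_eq⟩
  refine hD.induction (P := fun x => ‖G x‖ ≤ C * ‖x‖) (fun y hy => ?_) ?_ x
  · exact (congrArg norm (extend_eq ⟨y, hy⟩)).trans_le (hγ ⟨y, hy⟩)
  · exact isClosed_le G.continuous.norm (continuous_const.mul continuous_norm)

theorem exists_compLpL_subtypeL_eq {μ : Measure Ω} {p : ℝ≥0∞} [Fact (1 ≤ p)]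
    {M : Submodule ℝ X} {f : Lp X p μ} (hf : ∀ᵐ ω ∂μ, f ω ∈ M) :
    ∃ g : Lp M p μ, M.subtypeL.compLpL p μ g = f := by
  classical
  let g : Ω → M := fun ω => if hω : f ω ∈ M then ⟨f ω, hω⟩ else 0
  have hg : ∀ᵐ ω ∂μ, (g ω : X) = f ω := hf.mono fun ω hω => by simp [g, hω]
  have memLp_g : MemLp g p μ :=
    (memLp_congr_norm (Topology.IsEmbedding.subtypeVal.aestronglyMeasurable_comp_iff.1
      ((Lp.aestronglyMeasurable f).congr (hg.mono fun _ h => h.symm)))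
      (Lp.aestronglyMeasurable f) (hg.mono fun ω h => by rw [← h]; rfl)).2 (Lp.memLp f)
  refine ⟨memLp_g.toLp g, Lp.ext ?_⟩
  filter_upwards [M.subtypeL.coeFn_compLpL (memLp_g.toLp g), memLp_g.coeFn_toLp, hg]
    with ω h_comp h_toLp hω
  rw [h_comp, h_toLp]
  exact hω

theorem isClosed_setOf_apply_eq_integral {μ : Measure Ω} (Φ : StrongDual ℝ (Lp X 1 μ))
    {G : Ω → StrongDual ℝ X} {C : ℝ} (hG : ∀ᵐ ω ∂μ, ‖G ω‖ ≤ C) :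
    IsClosed {f : Lp X 1 μ | Integrable (fun ω => G ω (f ω)) μ ∧ Φ f = ∫ ω, G ω (f ω) ∂μ} := by
  refine IsSeqClosed.isClosed fun u f hu hlim => ?_
  have norm_apply_le : ∀ h : Lp X 1 μ, ∀ᵐ ω ∂μ, ‖G ω (h ω)‖ ≤ C * ‖h ω‖ := fun h =>
    hG.mono fun ω hω => (G ω).le_of_opNorm_le hω _
  have integrable_f : Integrable (fun ω => G ω (f ω)) μ := by
    obtain ⟨ψ, -, hψ⟩ := (tendstoInMeasure_of_tendsto_Lp hlim).exists_seq_tendsto_ae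
    exact ((L1.integrable_coeFn f).norm.const_mul C).mono'
      (aestronglyMeasurable_of_tendsto_ae atTop (fun k => (hu (ψ k)).1.aestronglyMeasurable)
        (hψ.mono fun ω hω => ((G ω).continuous.tendsto _).comp hω)) (norm_apply_le f)
  have norm_integral_sub_le : ∀ n,
      ‖(∫ ω, G ω (u n ω) ∂μ) - ∫ ω, G ω (f ω) ∂μ‖ ≤ C * ‖u n - f‖ := by
    intro n
    rw [← integral_sub (hu n).1 integrable_f, L1.norm_eq_integral_norm, ← integral_const_mul]
    refine norm_integral_le_of_norm_le ((L1.integrable_coeFn (u n - f)).norm.const_mul C) ?_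
    filter_upwards [norm_apply_le (u n - f), Lp.coeFn_sub (u n) f] with ω h_le h_sub
    rwa [h_sub, Pi.sub_apply, map_sub, ← Pi.sub_apply, ← h_sub] at h_le
  have tendsto_integral : Tendsto (fun n => ∫ ω, G ω (u n ω) ∂μ) atTop
      (𝓝 (∫ ω, G ω (f ω) ∂μ)) := by
    refine tendsto_iff_norm_sub_tendsto_zero.2
      (squeeze_zero (fun _ => norm_nonneg _) norm_integral_sub_le ?_)
    simpa using (tendsto_iff_norm_sub_tendsto_zero.1 hlim).const_mul C
  refine ⟨integrable_f, tendsto_nhds_unique ((Φ.continuous.tendsto f).comp hlim) ?_⟩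
  simpa only [Function.comp_def, fun n => (hu n).2] using tendsto_integral

variable {μ : Measure Ω} [IsFiniteMeasure μ] (Φ : StrongDual ℝ (Lp X 1 μ))

/-- The density `dν_x/dμ ∈ L²(μ)` of the signed measure `ν_x(A) = Φ(1_A x)` attached to a
functional `Φ` on `L¹(μ,X)` and a vector `x`. It comes from the Riesz representation of
`h ↦ Φ(h x)` on `L²(μ)`, which avoids the Radon–Nikodym theorem. -/
def functionalDensity : X →+ Lp ℝ 2 μ :=
  AddMonoidHom.mk' (fun x => (InnerProductSpace.toDual ℝ (Lp ℝ 2 μ)).symm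
    (Φ ∘L (ContinuousLinearMap.toSpanSingleton ℝ x).compLpL 1 μ ∘L lpInclusion one_le_two))
    fun x y => by
    rw [ContinuousLinearMap.toSpanSingleton_add, ContinuousLinearMap.add_compLpL,
      ContinuousLinearMap.add_comp, ContinuousLinearMap.comp_add, map_add]

theorem apply_indicatorConstLp_eq_setIntegral (x : X) {A : Set Ω} (hA : MeasurableSet A) :
    Φ (indicatorConstLp 1 hA (measure_ne_top μ A) x) = ∫ ω in A, functionalDensity Φ x ω ∂μ := by
  rw [← L2.inner_indicatorConstLp_one (𝕜 := ℝ) hA (measure_ne_top μ A), real_inner_comm]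
  refine Eq.trans ?_ (InnerProductSpace.toDual_symm_apply ..).symm
  refine congrArg Φ (Lp.ext ?_)
  let one_A : Lp ℝ 2 μ := indicatorConstLp 2 hA (measure_ne_top μ A) 1
  filter_upwards [indicatorConstLp_coeFn (p := 1) (hs := hA) (hμs := measure_ne_top μ A) (c := x),
    indicatorConstLp_coeFn (p := 2) (hs := hA) (hμs := measure_ne_top μ A) (c := (1 : ℝ)),
    (ContinuousLinearMap.toSpanSingleton ℝ x).coeFn_compLpL
      (lpInclusion one_le_two one_A : Lp ℝ 1 μ)] with ω h_indicator h_one h_comp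
  rw [h_indicator]
  refine Eq.trans ?_ h_comp.symm
  rw [coeFn_lpInclusion, h_one]
  by_cases hω : ω ∈ A <;> simp [hω]

theorem integrable_functionalDensity (x : X) : Integrable (functionalDensity Φ x) μ :=
  memLp_one_iff_integrable.1 ((Lp.memLp _).mono_exponent one_le_two)

theorem ae_abs_functionalDensity_le (x : X) :
    ∀ᵐ ω ∂μ, |functionalDensity Φ x ω| ≤ ‖Φ‖ * ‖x‖ := by
  have abs_setIntegral_le : ∀ A : Set Ω, MeasurableSet A →
      |∫ ω in A, functionalDensity Φ x ω ∂μ| ≤ μ.real A * (‖Φ‖ * ‖x‖) := by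
    intro A hA
    rw [← apply_indicatorConstLp_eq_setIntegral Φ x hA, ← Real.norm_eq_abs]
    refine (Φ.le_opNorm _).trans_eq ?_
    rw [norm_indicatorConstLp one_ne_zero ENNReal.one_ne_top]
    simp; ring
  have le_bound : functionalDensity Φ x ≤ᵐ[μ] fun _ => ‖Φ‖ * ‖x‖ := by
    refine ae_le_of_forall_setIntegral_le (integrable_functionalDensity Φ x)
      (integrable_const _) fun A hA _ => ?_
    rw [setIntegral_const, smul_eq_mul]
    exact (abs_le.1 (abs_setIntegral_le A hA)).2
  have bound_le : (fun _ => -(‖Φ‖ * ‖x‖)) ≤ᵐ[μ] functionalDensity Φ x := by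
    refine ae_le_of_forall_setIntegral_le (integrable_const _)
      (integrable_functionalDensity Φ x) fun A hA _ => ?_
    rw [setIntegral_const, smul_eq_mul, mul_neg]
    exact (abs_le.1 (abs_setIntegral_le A hA)).1
  filter_upwards [le_bound, bound_le] with ω h_le h_ge using abs_le.2 ⟨h_ge, h_le⟩

theorem ae_functionalDensity_add (x y : X) : ∀ᵐ ω ∂μ,
    functionalDensity Φ (x + y) ω = functionalDensity Φ x ω + functionalDensity Φ y ω := by
  rw [map_add]
  exact Lp.coeFn_add _ _

theorem ae_abs_functionalDensity_sub_le (x y : X) : ∀ᵐ ω ∂μ,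
    |functionalDensity Φ x ω - functionalDensity Φ y ω| ≤ ‖Φ‖ * ‖x - y‖ := by
  filter_upwards [ae_abs_functionalDensity_le Φ (x - y), ae_functionalDensity_add Φ (x - y) y]
    with ω h_le h_add
  rw [sub_add_cancel] at h_add
  rwa [h_add, add_sub_cancel_right]

theorem exists_ae_apply_eq_functionalDensity [TopologicalSpace.SeparableSpace X] :
    ∃ G : Ω → StrongDual ℝ X, (∀ᵐ ω ∂μ, ‖G ω‖ ≤ ‖Φ‖) ∧
      ∀ x, ∀ᵐ ω ∂μ, G ω x = functionalDensity Φ x ω := by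
  obtain ⟨D, hDc, hD⟩ := exists_countable_dense_addSubgroup X
  have : Countable D := hDc
  have exists_extension : ∀ᵐ ω ∂μ, ∃ G : StrongDual ℝ X, ‖G‖ ≤ ‖Φ‖ ∧
      ∀ d : D, G d = functionalDensity Φ (d : X) ω := by
    filter_upwards [ae_all_iff.2 fun d : D => ae_abs_functionalDensity_le Φ (d : X),
      ae_all_iff.2 fun d : D => ae_all_iff.2 fun e : D =>
        ae_functionalDensity_add Φ (d : X) e] with ω h_le h_add
    exact exists_strongDual_eqOn_of_dense hD (norm_nonneg Φ)
      (AddMonoidHom.mk' (fun d : D => functionalDensity Φ (d : X) ω) h_add) h_le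
  choose! G norm_le apply_eq using fun ω
    (h : ∃ G : StrongDual ℝ X, ‖G‖ ≤ ‖Φ‖ ∧ ∀ d : D, G d = functionalDensity Φ (d : X) ω) => h
  refine ⟨G, exists_extension.mono norm_le, fun x => ?_⟩
  obtain ⟨d, hdD, hdx⟩ := mem_closure_iff_seq_limit.1 (hD x)
  filter_upwards [exists_extension,
    ae_all_iff.2 fun k => ae_abs_functionalDensity_sub_le Φ (d k) x] with ω hω h_le
  have tendsto_density : Tendsto (fun k => functionalDensity Φ (d k) ω) atTop
      (𝓝 (functionalDensity Φ x ω)) := by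
    refine tendsto_iff_norm_sub_tendsto_zero.2 (squeeze_zero (fun _ => norm_nonneg _) h_le ?_)
    simpa using (tendsto_iff_norm_sub_tendsto_zero.1 hdx).const_mul ‖Φ‖
  refine tendsto_nhds_unique (((G ω).continuous.tendsto x).comp hdx) ?_
  simpa only [Function.comp_def, fun k => apply_eq ω hω ⟨d k, hdD k⟩] using tendsto_density

theorem exists_representation [TopologicalSpace.SeparableSpace X] :
    ∃ G : Ω → StrongDual ℝ X, (∀ᵐ ω ∂μ, ‖G ω‖ ≤ ‖Φ‖) ∧
      ∀ f : Lp X 1 μ, Integrable (fun ω => G ω (f ω)) μ ∧ Φ f = ∫ ω, G ω (f ω) ∂μ := by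
  obtain ⟨G, norm_le, apply_eq⟩ := exists_ae_apply_eq_functionalDensity Φ
  refine ⟨G, norm_le, Lp.induction one_ne_top _ ?indicator ?add
    (isClosed_setOf_apply_eq_integral Φ norm_le)⟩
  case indicator =>
    intro c A hA hμA
    have apply_indicator : (fun ω => G ω (indicatorConstLp 1 hA hμA.ne c ω)) =ᵐ[μ]
        A.indicator (functionalDensity Φ c) := by
      filter_upwards [apply_eq c,
        indicatorConstLp_coeFn (p := 1) (hs := hA) (hμs := hμA.ne) (c := c)] with ω hω h_indicator
      rw [h_indicator]
      by_cases hωA : ω ∈ A <;> simp [hωA, hω]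
    rw [Lp.simpleFunc.coe_indicatorConst]
    refine ⟨((integrable_functionalDensity Φ c).indicator hA).congr apply_indicator.symm, ?_⟩
    rw [integral_congr_ae apply_indicator, integral_indicator hA,
      apply_indicatorConstLp_eq_setIntegral Φ c hA]
  case add =>
    intro f g hf hg _ ⟨integrable_f, apply_f⟩ ⟨integrable_g, apply_g⟩
    have apply_add : (fun ω => G ω ((hf.toLp f + hg.toLp g : Lp X 1 μ) ω)) =ᵐ[μ]
        fun ω => G ω (hf.toLp f ω) + G ω (hg.toLp g ω) := by
      filter_upwards [Lp.coeFn_add (hf.toLp f) (hg.toLp g)] with ω hω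
      rw [hω, Pi.add_apply, map_add]
    refine ⟨(integrable_f.add integrable_g).congr apply_add.symm, ?_⟩
    rw [integral_congr_ae apply_add, integral_add integrable_f integrable_g, map_add, apply_f,
      apply_g]

theorem exists_representation_of_isSeparable {M : Submodule ℝ X}
    (hM : TopologicalSpace.IsSeparable (M : Set X)) :
    ∃ G : Ω → StrongDual ℝ X, ∃ C : ℝ, (∀ᵐ ω ∂μ, ‖G ω‖ ≤ C) ∧
      ∀ f : Lp X 1 μ, (∀ᵐ ω ∂μ, f ω ∈ M) →
        Integrable (fun ω => G ω (f ω)) μ ∧ Φ f = ∫ ω, G ω (f ω) ∂μ := by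
  have : TopologicalSpace.SeparableSpace M := hM.separableSpace
  obtain ⟨G, norm_le, hG⟩ := exists_representation (Φ ∘L M.subtypeL.compLpL 1 μ)
  choose G' hG' norm_G' using fun ω => exists_extension_norm_eq M (G ω)
  refine ⟨G', _, norm_le.mono fun ω hω => (norm_G' ω).trans_le hω, fun f hf => ?_⟩
  obtain ⟨g, rfl⟩ := exists_compLpL_subtypeL_eq hf
  have apply_eq : (fun ω => G ω (g ω)) =ᵐ[μ] fun ω => G' ω (M.subtypeL.compLpL 1 μ g ω) := by
    filter_upwards [M.subtypeL.coeFn_compLpL g] with ω hω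
    rw [hω]
    exact (hG' ω _).symm
  exact ⟨(hG g).1.congr apply_eq, (hG g).2.trans (integral_congr_ae apply_eq)⟩

theorem weakTendsto_lpInclusion_top_one {u : ℕ → Lp X ∞ μ} {f : Lp X ∞ μ} {C : ℝ}
    (hu : ∀ n, ‖u n‖ ≤ C) (h : ∀ᵐ ω ∂μ, WeakTendsto (fun n => u n ω) atTop (f ω)) :
    WeakTendsto (fun n => (lpInclusion le_top (u n) : Lp X 1 μ)) atTop
      (lpInclusion le_top f) := by
  intro Φ
  have separable_ranges :
      TopologicalSpace.IsSeparable (range f ∪ ⋃ n, range (u n)) :=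
    (Lp.stronglyMeasurable f).isSeparable_range.union
      (.iUnion fun n => (Lp.stronglyMeasurable (u n)).isSeparable_range)
  obtain ⟨G, B, norm_le, hG⟩ := exists_representation_of_isSeparable Φ
    (isSeparable_topologicalClosure_span separable_ranges)
  have ranges_subset := subset_topologicalClosure_span (range f ∪ ⋃ n, range (u n))
  have hGu n := hG (lpInclusion le_top (u n)) (ae_of_all _ fun ω =>
    ranges_subset (.inr (mem_iUnion.2 ⟨n, mem_range_self ω⟩)))
  have hGf := hG (lpInclusion le_top f) (ae_of_all _ fun ω =>
    ranges_subset (.inl (mem_range_self ω)))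
  rw [hGf.2]
  simp only [fun n => (hGu n).2]
  refine tendsto_integral_of_dominated_convergence (fun _ => B * C)
    (fun n => (hGu n).1.aestronglyMeasurable) (integrable_const _) (fun n => ?_) ?_
  · filter_upwards [norm_le, ae_norm_coeFn_le_norm (u n)] with ω hω h_norm
    exact (G ω).le_of_opNorm_le_of_le hω (h_norm.trans (hu n))
  · filter_upwards [h] with ω hω using hω (G ω)

theorem mem_closure_convexHull_lpInclusion_top {p : ℝ≥0∞} [Fact (1 ≤ p)] (hp : p ≠ ∞)
    {u : ℕ → Lp X ∞ μ} {f : Lp X ∞ μ} {C : ℝ} (hu : ∀ n, ‖u n‖ ≤ C)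
    (h : ∀ᵐ ω ∂μ, WeakTendsto (fun n => u n ω) atTop (f ω)) (n : ℕ) :
    (lpInclusion le_top f : Lp X p μ) ∈
      closure (convexHull ℝ ((fun k => (lpInclusion le_top (u k) : Lp X p μ)) '' Ici n)) := by
  refine Metric.mem_closure_iff.2 fun ε hε => ?_
  obtain ⟨η, hη, norm_lt⟩ := exists_norm_lpInclusion_top_lt (X := X) (μ := μ) hp (‖f‖ + C) hε
  obtain ⟨w, hw, dist_lt⟩ := Metric.mem_closure_iff.1
    ((weakTendsto_lpInclusion_top_one hu h).mem_closure_convexHull n) η hη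
  rw [convexHull_lpInclusion_image] at hw
  obtain ⟨v, hv, rfl⟩ := hw
  have image_subset : u '' Ici n ⊆ Metric.closedBall 0 C :=
    image_subset_iff.2 fun k _ => mem_closedBall_zero_iff.2 (hu k)
  have norm_v : ‖v‖ ≤ C :=
    mem_closedBall_zero_iff.1 (convexHull_min image_subset (convex_closedBall 0 C) hv)
  refine ⟨lpInclusion le_top v, ?_, ?_⟩
  · rw [convexHull_lpInclusion_image]
    exact mem_image_of_mem _ hv
  · rw [dist_eq_norm, ← map_sub]
    refine norm_lt _ ((norm_sub_le _ _).trans (by gcongr)) ?_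
    rwa [map_sub, ← dist_eq_norm]

end Representation

section EquiIntegrability

theorem isClosed_setOf_ae_norm_le {E : Type*} [NormedAddCommGroup E] {μ : Measure Ω} {p : ℝ≥0∞}
    [Fact (1 ≤ p)] (C : ℝ) : IsClosed {f : Lp E p μ | ∀ᵐ ω ∂μ, ‖f ω‖ ≤ C} := by
  refine IsSeqClosed.isClosed fun u f hu hlim => ?_
  obtain ⟨ψ, -, hψ⟩ := (tendstoInMeasure_of_tendsto_Lp hlim).exists_seq_tendsto_ae
  filter_upwards [hψ, ae_all_iff.2 fun k => hu (ψ k)] with ω h_lim h_le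
  exact le_of_tendsto' h_lim.norm h_le

theorem exists_stronglyMeasurable_norm_sub_le {f : Ω → X} (hf : StronglyMeasurable f) {ε : ℝ}
    (hε : 0 < ε) : ∃ s : Ω → StrongDual ℝ X, StronglyMeasurable s ∧
      ∀ ω, ‖s ω‖ ≤ 1 ∧ ‖f ω‖ - ε ≤ s ω (f ω) := by
  classical
  obtain ⟨φ, hφ⟩ := exists_isNorming hf.isSeparable_range
  have exists_index : ∀ ω, ∃ i, ‖f ω‖ - ε ≤ φ i (f ω) := fun ω =>
    hφ.exists_sub_le _ (mem_range_self ω) ε hε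
  have measurable_index : Measurable fun ω => Nat.find (exists_index ω) :=
    measurable_find exists_index fun i => measurableSet_le (hf.norm.measurable.sub_const ε)
      ((φ i).continuous.comp_stronglyMeasurable hf).measurable
  exact ⟨fun ω => φ (Nat.find (exists_index ω)),
    (continuous_of_discreteTopology (f := φ)).comp_stronglyMeasurable
      measurable_index.stronglyMeasurable,
    fun ω => ⟨hφ.norm_le_one _, Nat.find_spec (exists_index ω)⟩⟩

variable {μ : Measure Ω}

/-- The measurable fields of functionals `ω ↦ g(ω)` of norm at most `1`. They act on `L¹(μ,X)` by
`f ↦ ∫ g(ω)(f(ω)) dμ`, but carry the metric of `L¹(μ,X*)`: it is complete, and changing a field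
on a set of small measure moves it only a little. -/
def functionalFields (μ : Measure Ω) (X : Type*) [NormedAddCommGroup X] [NormedSpace ℝ X] :
    Set (Lp (StrongDual ℝ X) 1 μ) :=
  {g | ∀ᵐ ω ∂μ, ‖g ω‖ ≤ 1}

theorem zero_mem_functionalFields : 0 ∈ functionalFields μ X := by
  filter_upwards [Lp.coeFn_zero (StrongDual ℝ X) 1 μ] with ω hω
  rw [hω]
  simp

theorem ae_norm_apply_le {g : Lp (StrongDual ℝ X) 1 μ} (hg : g ∈ functionalFields μ X)
    (f : Ω → X) : ∀ᵐ ω ∂μ, ‖g ω (f ω)‖ ≤ ‖f ω‖ := by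
  filter_upwards [hg] with ω hω
  simpa using (g ω).le_of_opNorm_le hω (f ω)

theorem integrable_apply {g : Lp (StrongDual ℝ X) 1 μ} (hg : g ∈ functionalFields μ X)
    (f : Lp X 1 μ) : Integrable (fun ω => g ω (f ω)) μ :=
  (L1.integrable_coeFn f).norm.mono'
    (isBoundedBilinearMap_apply.continuous.comp_aestronglyMeasurable
      ((Lp.aestronglyMeasurable g).prodMk (Lp.aestronglyMeasurable f)))
    (ae_norm_apply_le hg f)

theorem exists_strongDual_eq_integral {g : Lp (StrongDual ℝ X) 1 μ}
    (hg : g ∈ functionalFields μ X) :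
    ∃ Φ : StrongDual ℝ (Lp X 1 μ), ∀ f : Lp X 1 μ, Φ f = ∫ ω, g ω (f ω) ∂μ := by
  have memLp_top : MemLp g ∞ μ := memLp_top_of_bound (Lp.aestronglyMeasurable g) 1 hg
  refine ⟨(ContinuousLinearMap.id ℝ (StrongDual ℝ X)).lpPairing μ ∞ 1 (memLp_top.toLp g),
    fun f => ?_⟩
  rw [ContinuousLinearMap.lpPairing_eq_integral]
  exact integral_congr_ae (memLp_top.coeFn_toLp.mono fun ω hω => by simp [hω])

theorem continuousOn_integral_apply (f : Lp X 1 μ) :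
    ContinuousOn (fun g : Lp (StrongDual ℝ X) 1 μ => ∫ ω, g ω (f ω) ∂μ)
      (functionalFields μ X) := by
  refine continuousOn_iff_continuous_domRestrict.2 (continuous_iff_seqContinuous.2 fun g g₀ h => ?_)
  refine tendsto_of_subseq_tendsto fun ns hns => ?_
  have tendsto_val : Tendsto (fun n => (g (ns n)).1) atTop (𝓝 g₀.1) :=
    (continuous_subtype_val.tendsto g₀).comp (h.comp hns)
  obtain ⟨ms, -, hms⟩ := (tendstoInMeasure_of_tendsto_Lp tendsto_val).exists_seq_tendsto_ae
  refine ⟨ms, tendsto_integral_of_dominated_convergence (fun ω => ‖f ω‖)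
    (fun n => (integrable_apply (g (ns (ms n))).2 f).aestronglyMeasurable)
    (L1.integrable_coeFn f).norm (fun n => ae_norm_apply_le (g (ns (ms n))).2 f) ?_⟩
  filter_upwards [hms] with ω hω
  exact ((ContinuousLinearMap.apply ℝ ℝ (f ω)).continuous.tendsto _).comp hω

theorem exists_ball_forall_abs_integral_le {h : ℕ → Lp X 1 μ} (hh : WeakTendsto h atTop 0)
    {ε : ℝ} (hε : 0 < ε) :
    ∃ g₀ ∈ functionalFields μ X, ∃ δ : ℝ, 0 < δ ∧ ∃ N, ∀ g ∈ functionalFields μ X,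
      dist g g₀ < δ → ∀ n ≥ N, |∫ ω, g ω (h n ω) ∂μ| ≤ ε := by
  let F (N : ℕ) : Set (functionalFields μ X) := {g | ∀ n ≥ N, |∫ ω, g.1 ω (h n ω) ∂μ| ≤ ε}
  have isClosed_F : ∀ N, IsClosed (F N) := by
    intro N
    simp only [F, ofPred_forall]
    exact isClosed_biInter fun n _ => isClosed_le
      (continuousOn_iff_continuous_domRestrict.1 (continuousOn_integral_apply (h n))).abs
      continuous_const
  have iUnion_F : ⋃ N, F N = univ := by
    refine eq_univ_of_forall fun g => ?_
    obtain ⟨Φ, hΦ⟩ := exists_strongDual_eq_integral g.2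
    have tendsto_integral := (weakTendsto_zero_iff.1 hh Φ).abs
    simp only [hΦ, abs_zero] at tendsto_integral
    obtain ⟨N, hN⟩ := eventually_atTop.1 (tendsto_integral.eventually_lt_const hε)
    exact mem_iUnion.2 ⟨N, fun n hn => (hN n hn).le⟩
  have : CompleteSpace (functionalFields μ X) :=
    (isClosed_setOf_ae_norm_le 1).completeSpace_coe
  have : Nonempty (functionalFields μ X) := ⟨0, zero_mem_functionalFields⟩
  obtain ⟨N, g₀, hg₀⟩ := nonempty_interior_of_iUnion_of_closed isClosed_F iUnion_F
  obtain ⟨δ, hδ, ball_subset⟩ := Metric.mem_nhds_iff.1 (mem_interior_iff_mem_nhds.1 hg₀)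
  refine ⟨g₀, g₀.2, δ, hδ, N, fun g hg hdist => ?_⟩
  have mem_F : (⟨g, hg⟩ : functionalFields μ X) ∈ F N := ball_subset hdist
  exact mem_F

variable [IsFiniteMeasure μ]

theorem exists_functionalField_eq_piecewise {A : Set Ω} (hA : MeasurableSet A)
    [DecidablePred (· ∈ A)] {s : Ω → StrongDual ℝ X} (hs : StronglyMeasurable s)
    (hs_le : ∀ ω, ‖s ω‖ ≤ 1) {g₀ : Lp (StrongDual ℝ X) 1 μ} (hg₀ : g₀ ∈ functionalFields μ X) :
    ∃ g ∈ functionalFields μ X, g =ᵐ[μ] A.piecewise s g₀ ∧ dist g g₀ ≤ 2 * μ.real A := by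
  have norm_le : ∀ᵐ ω ∂μ, ‖A.piecewise s g₀ ω‖ ≤ 1 := by
    filter_upwards [hg₀] with ω hω
    by_cases hωA : ω ∈ A <;> simp [hωA, hs_le, hω]
  have memLp : MemLp (A.piecewise s g₀) 1 μ :=
    .of_bound (hs.piecewise hA (Lp.stronglyMeasurable g₀)).aestronglyMeasurable 1 norm_le
  refine ⟨memLp.toLp _, ?_, memLp.coeFn_toLp, ?_⟩
  · filter_upwards [norm_le, memLp.coeFn_toLp] with ω h_le h_eq
    rwa [h_eq]
  · rw [L1.dist_eq_integral_dist, mul_comm, ← smul_eq_mul, ← setIntegral_const,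
      ← integral_indicator hA]
    refine integral_mono_of_nonneg (ae_of_all _ fun ω => dist_nonneg)
      ((integrable_const _).indicator hA) ?_
    filter_upwards [memLp.coeFn_toLp, hg₀] with ω h_eq h_le
    rw [h_eq, dist_eq_norm]
    by_cases hωA : ω ∈ A
    · simpa [hωA] using (norm_sub_le_of_le (hs_le ω) h_le).trans_eq one_add_one_eq_two
    · simp [hωA]

theorem WeakTendsto.exists_forall_abs_setIntegral_le {h : ℕ → Lp X 1 μ}
    (hh : WeakTendsto h atTop 0) {ε : ℝ} (hε : 0 < ε) :
    ∃ δ : ℝ, 0 < δ ∧ ∃ N, ∀ n ≥ N, ∀ A : Set Ω, MeasurableSet A → μ.real A < δ →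
      ∀ s : Ω → StrongDual ℝ X, StronglyMeasurable s → (∀ ω, ‖s ω‖ ≤ 1) →
        |∫ ω in A, s ω (h n ω) ∂μ| ≤ 2 * ε := by
  classical
  obtain ⟨g₀, hg₀, δ, hδ, N, hN⟩ := exists_ball_forall_abs_integral_le hh hε
  refine ⟨δ / 2, by positivity, N, fun n hn A hA hμA s hs hs_le => ?_⟩
  have abs_integral_piecewise_le : ∀ s : Ω → StrongDual ℝ X, StronglyMeasurable s →
      (∀ ω, ‖s ω‖ ≤ 1) → ∃ g ∈ functionalFields μ X, g =ᵐ[μ] A.piecewise s g₀ ∧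
        |∫ ω, g ω (h n ω) ∂μ| ≤ ε := by
    intro s hs hs_le
    obtain ⟨g, hg, g_eq, hdist⟩ := exists_functionalField_eq_piecewise hA hs hs_le hg₀
    exact ⟨g, hg, g_eq, hN g hg (by linarith) n hn⟩
  obtain ⟨g₁, hg₁, g₁_eq, g₁_le⟩ := abs_integral_piecewise_le s hs hs_le
  obtain ⟨g₂, hg₂, g₂_eq, g₂_le⟩ :=
    abs_integral_piecewise_le 0 stronglyMeasurable_zero (by simp)
  have setIntegral_eq : ∫ ω in A, s ω (h n ω) ∂μ =
      (∫ ω, g₁ ω (h n ω) ∂μ) - ∫ ω, g₂ ω (h n ω) ∂μ := by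
    rw [← integral_sub (integrable_apply hg₁ _) (integrable_apply hg₂ _),
      ← integral_indicator hA]
    refine integral_congr_ae ?_
    filter_upwards [g₁_eq, g₂_eq] with ω h₁ h₂
    rw [h₁, h₂]
    by_cases hωA : ω ∈ A <;> simp [hωA]
  rw [setIntegral_eq]
  exact (abs_sub _ _).trans (by linarith)

theorem WeakTendsto.exists_forall_setIntegral_norm_le {h : ℕ → Lp X 1 μ}
    (hh : WeakTendsto h atTop 0) {ε : ℝ} (hε : 0 < ε) :
    ∃ δ : ℝ, 0 < δ ∧ ∃ N, ∀ n ≥ N, ∀ A : Set Ω, MeasurableSet A → μ.real A < δ →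
      ∫ ω in A, ‖h n ω‖ ∂μ ≤ ε := by
  obtain ⟨δ, hδ, N, hN⟩ := hh.exists_forall_abs_setIntegral_le (show 0 < ε / 4 by positivity)
  refine ⟨min δ 1, lt_min hδ one_pos, N, fun n hn A hA hμA => ?_⟩
  obtain ⟨s, hs, s_spec⟩ :=
    exists_stronglyMeasurable_norm_sub_le (Lp.stronglyMeasurable (h n)) (half_pos hε)
  have integrable_s : IntegrableOn (fun ω => s ω (h n ω)) A μ :=
    ((L1.integrable_coeFn (h n)).norm.mono'
      (isBoundedBilinearMap_apply.continuous.comp_aestronglyMeasurable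
        (hs.aestronglyMeasurable.prodMk (Lp.aestronglyMeasurable (h n))))
      (ae_of_all _ fun ω => by
        simpa using (s ω).le_of_opNorm_le (s_spec ω).1 (h n ω))).integrableOn
  calc ∫ ω in A, ‖h n ω‖ ∂μ ≤ ∫ ω in A, (ε / 2 + s ω (h n ω)) ∂μ :=
        integral_mono (L1.integrable_coeFn (h n)).norm.integrableOn
          ((integrable_const _).add integrable_s) fun ω => by linarith [(s_spec ω).2]
    _ = μ.real A * (ε / 2) + ∫ ω in A, s ω (h n ω) ∂μ := by
        rw [integral_add (integrable_const _) integrable_s, setIntegral_const, smul_eq_mul]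
    _ ≤ 1 * (ε / 2) + 2 * (ε / 4) := by
        gcongr
        · exact hμA.le.trans (min_le_right _ _)
        · exact (le_abs_self _).trans
            (hN n hn A hA (hμA.trans_le (min_le_left _ _)) s hs fun ω => (s_spec ω).1)
    _ = ε := by ring

theorem setIntegral_norm_le_setIntegral_norm_sub_add {E : Type*}
    [NormedAddCommGroup E] {μ : Measure Ω} (f g : Lp E 1 μ) (A : Set Ω) :
    ∫ ω in A, ‖f ω‖ ∂μ ≤ ∫ ω in A, ‖(f - g : Lp E 1 μ) ω‖ ∂μ + ∫ ω in A, ‖g ω‖ ∂μ := by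
  have integrable_norm := fun h : Lp E 1 μ => (L1.integrable_coeFn h).norm.integrableOn (s := A)
  rw [← integral_add (integrable_norm _) (integrable_norm _)]
  refine integral_mono_ae (integrable_norm _) ((integrable_norm _).add (integrable_norm _)) ?_
  filter_upwards [ae_restrict_of_ae (Lp.coeFn_sub f g)] with ω hω
  rw [hω]
  exact norm_le_norm_sub_add _ _

theorem IsRelWeaklyCompact.unifIntegrableSet {K : Set (Lp X 1 μ)} (hK : IsRelWeaklyCompact K) :
    UnifIntegrableSet μ K := by
  refine ⟨hK.exists_norm_le, ?_⟩
  by_contra! ⟨ε, hε, not_unif⟩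
  choose f hf A hμA lt_integral using fun n : ℕ => not_unif (1 / ((n : ℝ) + 1)) (by positivity)
  obtain ⟨ψ, hψ, f₀, hf₀⟩ := hK.exists_subseq hf
  let B : ℕ → Set Ω := fun n => toMeasurable μ (A (ψ n))
  have tendsto_measureReal : Tendsto (fun n => μ.real (B n)) atTop (𝓝 0) := by
    refine squeeze_zero (g := fun n => 1 / ((ψ n : ℝ) + 1)) (fun n => measureReal_nonneg)
      (fun n => ?_) (tendsto_one_div_add_atTop_nhds_zero_nat.comp hψ.tendsto_atTop)
    rw [measureReal_def, measure_toMeasurable]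
    exact ENNReal.toReal_le_of_le_ofReal (by positivity) (hμA (ψ n))
  have tendsto_integral : Tendsto (fun n => ∫ ω in B n, ‖f₀ ω‖ ∂μ) atTop (𝓝 0) :=
    (L1.integrable_coeFn f₀).norm.tendsto_setIntegral_nhds_zero
      (by simpa [Function.comp_def] using ENNReal.tendsto_ofReal tendsto_measureReal)
  obtain ⟨δ, hδ, N, hN⟩ :=
    (weakTendsto_zero_iff.2 fun Φ => by simpa using hf₀.sub_const f₀ Φ :
      WeakTendsto (fun n => f (ψ n) - f₀) atTop 0).exists_forall_setIntegral_norm_le (half_pos hε)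
  obtain ⟨n, ⟨measure_lt, integral_lt⟩, hn⟩ :=
    (((tendsto_measureReal.eventually_lt_const hδ).and
      (tendsto_integral.eventually_lt_const (half_pos hε))).and (eventually_ge_atTop N)).exists
  refine (lt_integral (ψ n)).not_ge ?_
  rw [← Measure.restrict_toMeasurable (measure_ne_top μ _)]
  calc ∫ ω in B n, ‖f (ψ n) ω‖ ∂μ
      ≤ ∫ ω in B n, ‖(f (ψ n) - f₀ : Lp X 1 μ) ω‖ ∂μ + ∫ ω in B n, ‖f₀ ω‖ ∂μ :=
        setIntegral_norm_le_setIntegral_norm_sub_add _ _ _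
    _ ≤ ε / 2 + ε / 2 :=
        add_le_add (hN n hn (B n) (measurableSet_toMeasurable _ _) measure_lt) integral_lt.le
    _ = ε := add_halves ε

end EquiIntegrability

section WeaklyCompactValued

theorem exists_lp_two_apply_eq {φ : ℕ → StrongDual ℝ X} (hφ : ∀ i, ‖φ i‖ ≤ 1) :
    ∃ T : X →L[ℝ] lp (fun _ : ℕ => ℝ) 2, ∀ x i, T x i = (1 / 2) ^ i * φ i x := by
  have sum_le : ∀ x (s : Finset ℕ),
      ∑ i ∈ s, ‖(1 / 2 : ℝ) ^ i * φ i x‖ ^ (2 : ℝ≥0∞).toReal ≤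
        (2 * ‖x‖) ^ (2 : ℝ≥0∞).toReal := by
    intro x s
    simp only [toReal_ofNat, Real.rpow_ofNat]
    calc ∑ i ∈ s, ‖(1 / 2 : ℝ) ^ i * φ i x‖ ^ 2
        ≤ (∑ i ∈ s, ‖(1 / 2 : ℝ) ^ i * φ i x‖) ^ 2 :=
          Finset.sum_sq_le_sq_sum_of_nonneg fun i _ => norm_nonneg _
      _ ≤ (∑ i ∈ s, (1 / 2 : ℝ) ^ i * ‖x‖) ^ 2 := by
          gcongr with i
          rw [norm_mul, Real.norm_of_nonneg (by positivity)]
          gcongr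
          simpa using (φ i).le_of_opNorm_le (hφ i) x
      _ ≤ (2 * ‖x‖) ^ 2 := by
          rw [← Finset.sum_mul]
          gcongr
          exact (summable_geometric_two.sum_le_tsum s fun i _ => by positivity).trans_eq
            tsum_geometric_two
  exact ⟨LinearMap.mkContinuous
    { toFun x := ⟨fun i => (1 / 2) ^ i * φ i x, memℓp_gen' (sum_le x)⟩
      map_add' _ _ := by simp only [map_add, mul_add]; rfl
      map_smul' _ _ := by ext; simp [mul_left_comm] }
    2 fun x => lp.norm_le_of_forall_sum_le (by simp) (by positivity) (sum_le x),
    fun x i => rfl⟩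

theorem IsNorming.exists_stronglyMeasurable_weakTendsto {φ : ℕ → StrongDual ℝ X}
    {M : Submodule ℝ X} (hφ : IsNorming φ (M : Set X))
    (hM : TopologicalSpace.IsSeparable (M : Set X)) {V : Set X} (hV : IsWeaklyCompact V)
    (hVM : V ⊆ M) {μ : Measure Ω} {g : ℕ → Ω → X} (hg : ∀ n, StronglyMeasurable (g n))
    (h : ∀ᵐ ω ∂μ, (∀ n, g n ω ∈ V) ∧ ∀ i, ∃ c, Tendsto (fun n => φ i (g n ω)) atTop (𝓝 c)) :
    ∃ f : Ω → X, StronglyMeasurable f ∧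
      ∀ᵐ ω ∂μ, f ω ∈ V ∧ WeakTendsto (fun n => g n ω) atTop (f ω) := by
  classical
  obtain ⟨N, not_subset_N, hN, μN⟩ := exists_measurable_superset_of_null h
  have exists_limit : ∀ ω, ∃ x ∈ M, (ω ∉ N → x ∈ V) ∧
      WeakTendsto (fun n => Nᶜ.indicator (g n) ω) atTop x := by
    intro ω
    by_cases hω : ω ∈ N
    · exact ⟨0, M.zero_mem, fun h => absurd hω h, fun ψ => by simp [hω]⟩
    · obtain ⟨mem_V, hlim⟩ := not_not.1 fun h => hω (not_subset_N h)
      obtain ⟨x, hx, g_tendsto⟩ := hφ.exists_mem_weakTendsto hV hVM mem_V hlim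
      exact ⟨x, hVM hx, fun _ => hx, by simpa [hω] using g_tendsto⟩
  choose f hfM hfV hf using exists_limit
  refine ⟨f, hφ.stronglyMeasurable hM hfM fun i =>
    measurable_of_tendsto_metrizable (fun n => ((φ i).continuous.comp_stronglyMeasurable
      ((hg n).indicator hN.compl)).measurable) (tendsto_pi_nhds.2 fun ω => hf ω (φ i)), ?_⟩
  filter_upwards [compl_mem_ae_iff.2 μN] with ω hω
  exact ⟨hfV ω hω, by simpa [indicator_of_mem hω] using hf ω⟩

theorem exists_isSeparable_isWeaklyCompact_ae_mem [CompleteSpace X] {μ : Measure Ω} {p : ℝ≥0∞}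
    {W : Set X} (hW : IsWeaklyCompact W) {u : ℕ → Lp X p μ} (hu : ∀ n, ∀ᵐ ω ∂μ, u n ω ∈ W) :
    ∃ (M : Submodule ℝ X) (V : Set X), TopologicalSpace.IsSeparable (M : Set X) ∧ V ⊆ M ∧
      IsWeaklyCompact V ∧ Convex ℝ V ∧ ∀ n, ∀ᵐ ω ∂μ, u n ω ∈ V := by
  let M := (Submodule.span ℝ (⋃ n, range (u n : Ω → X))).topologicalClosure
  have isSeparable_M : TopologicalSpace.IsSeparable (M : Set X) :=
    isSeparable_topologicalClosure_span
      (.iUnion fun n => (Lp.stronglyMeasurable (u n)).isSeparable_range)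
  have isClosed_M : IsClosed (M : Set X) := Submodule.isClosed_topologicalClosure _
  refine ⟨M, closure (convexHull ℝ (W ∩ M)), isSeparable_M,
    closure_minimal (convexHull_min inter_subset_right M.convex) isClosed_M,
    (hW.inter_right M.convex isClosed_M).closure_convexHull
      (isSeparable_M.mono inter_subset_right),
    (convex_convexHull ℝ _).closure, fun n => ?_⟩
  filter_upwards [hu n] with ω hω
  exact subset_closure (subset_convexHull ℝ _ ⟨hω,
    subset_topologicalClosure_span _ (mem_iUnion.2 ⟨n, mem_range_self ω⟩)⟩)

variable {μ : Measure Ω} [IsFiniteMeasure μ]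

theorem exists_mem_convexHull_tail_ae_tendsto {φ : ℕ → StrongDual ℝ X} (hφ : ∀ i, ‖φ i‖ ≤ 1)
    {u : ℕ → Lp X ∞ μ} {C : ℝ} (hu : ∀ n, ‖u n‖ ≤ C) :
    ∃ g : ℕ → Lp X ∞ μ, (∀ n, g n ∈ convexHull ℝ (u '' Ici n)) ∧
      ∀ᵐ ω ∂μ, ∀ i, ∃ c, Tendsto (fun n => φ i (g n ω)) atTop (𝓝 c) := by
  obtain ⟨T, hT⟩ := exists_lp_two_apply_eq hφ
  let S : Lp X ∞ μ →L[ℝ] Lp (lp (fun _ : ℕ => ℝ) 2) 2 μ :=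
    (T.compLpL 2 μ).comp (lpInclusion le_top)
  obtain ⟨v, z, hv, v_tendsto⟩ := exists_tendsto_mem_convexHull_tail
    (u := fun n => S (u n)) ⟨‖S‖ * C, fun n => S.le_opNorm_of_le (hu n)⟩
  have exists_preimage : ∀ n, ∃ g ∈ convexHull ℝ (u '' Ici n), S g = v n := by
    intro n
    have := hv n
    rwa [← image_image S, ← ContinuousLinearMap.coe_coe S, ← S.toLinearMap.image_convexHull]
      at this
  choose g hg hgv using exists_preimage
  obtain ⟨ψ, hψ, v_tendsto_ae⟩ :=
    (tendstoInMeasure_of_tendsto_Lp v_tendsto).exists_seq_tendsto_ae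
  refine ⟨g ∘ ψ, fun n => convexHull_mono (image_mono (Ici_subset_Ici.2 (hψ.id_le n))) (hg (ψ n)),
    ?_⟩
  filter_upwards [v_tendsto_ae, ae_all_iff.2 fun n =>
    T.coeFn_compLp (lpInclusion (q := 2) le_top (g n))] with ω tendsto_ω v_eq i
  have apply_eq : ∀ n, v n ω i = (1 / 2) ^ i * φ i (g n ω) := fun n => by
    rw [← hT, ← coeFn_lpInclusion (q := 2) le_top (g n), ← v_eq, ← hgv]
    rfl
  have tendsto_coord : Tendsto (fun n => v (ψ n) ω i) atTop (𝓝 (z ω i)) :=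
    ((lp.evalCLM ℝ (fun _ : ℕ => ℝ) 2 i).continuous.tendsto _).comp tendsto_ω
  refine ⟨2 ^ i * z ω i, (tendsto_coord.const_mul (2 ^ i)).congr fun n => ?_⟩
  simp [apply_eq]

theorem exists_mem_convexHull_tail_ae_weakTendsto [CompleteSpace X] {W : Set X}
    (hW : IsWeaklyCompact W) {u : ℕ → Lp X ∞ μ} (hu : ∀ n, ∀ᵐ ω ∂μ, u n ω ∈ W) :
    ∃ (g : ℕ → Lp X ∞ μ) (f : Lp X ∞ μ) (C : ℝ),
      (∀ n, g n ∈ convexHull ℝ (u '' Ici n)) ∧ (∀ n, ‖g n‖ ≤ C) ∧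
      ∀ᵐ ω ∂μ, WeakTendsto (fun n => g n ω) atTop (f ω) := by
  obtain ⟨M, V, hM, hVM, hV, convex_V, hu⟩ := exists_isSeparable_isWeaklyCompact_ae_mem hW hu
  obtain ⟨φ, hφ⟩ := exists_isNorming hM
  obtain ⟨C, hCV⟩ := hV.isRelWeaklyCompact.exists_norm_le
  have norm_le : ∀ f : Lp X ∞ μ, (∀ᵐ ω ∂μ, f ω ∈ V) → ‖f‖ ≤ |C| := fun f hf =>
    norm_le_of_ae_norm_coeFn_le (abs_nonneg C)
      (hf.mono fun ω hω => (hCV _ hω).trans (le_abs_self C))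
  obtain ⟨g, hg, hlim⟩ := exists_mem_convexHull_tail_ae_tendsto hφ.norm_le_one
    fun n => norm_le (u n) (hu n)
  have g_mem : ∀ n, ∀ᵐ ω ∂μ, g n ω ∈ V := fun n =>
    ae_mem_of_mem_convexHull convex_V (forall_mem_image.2 fun k _ => hu k) (hg n)
  obtain ⟨f, hf, f_spec⟩ := hφ.exists_stronglyMeasurable_weakTendsto hM hV hVM
    (fun n => Lp.stronglyMeasurable (g n)) ((ae_all_iff.2 g_mem).and hlim)
  have memLp_f : MemLp f ∞ μ :=
    memLp_top_of_bound hf.aestronglyMeasurable C (f_spec.mono fun ω hω => hCV _ hω.1)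
  refine ⟨g, memLp_f.toLp f, |C|, hg, fun n => norm_le _ (g_mem n), ?_⟩
  filter_upwards [f_spec, memLp_f.coeFn_toLp] with ω hω f_eq
  rw [f_eq]
  exact hω.2

theorem exists_mem_closure_convexHull_lpInclusion_top [CompleteSpace X] {p : ℝ≥0∞}
    [Fact (1 ≤ p)] (hp : p ≠ ∞) {W : Set X} (hW : IsWeaklyCompact W) {u : ℕ → Lp X ∞ μ}
    (hu : ∀ n, ∀ᵐ ω ∂μ, u n ω ∈ W) :
    ∃ f : Lp X p μ, ∀ n,
      f ∈ closure (convexHull ℝ ((fun k => (lpInclusion le_top (u k) : Lp X p μ)) '' Ici n)) := by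
  obtain ⟨g, f, C, hg, norm_g, g_tendsto⟩ := exists_mem_convexHull_tail_ae_weakTendsto hW hu
  refine ⟨lpInclusion le_top f, fun n => closure_mono (convexHull_min ?_ (convex_convexHull ℝ _))
    (mem_closure_convexHull_lpInclusion_top hp norm_g g_tendsto n)⟩
  rintro _ ⟨k, hk, rfl⟩
  rw [convexHull_lpInclusion_image]
  exact mem_image_of_mem _ (convexHull_mono (image_mono (Ici_subset_Ici.2 hk)) (hg k))

end WeaklyCompactValued

section WeaklyTight

variable {ι : Type*} {μ ν : Measure Ω} {u v : ι → Ω → X}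

/-- A family of functions is weakly tight if, up to small sets, its members take values in a
common weakly compact set. This is the second clause in the definition of a δS-set, phrased with
the exceptional sets so that it makes sense for every measure. -/
def WeaklyTight (μ : Measure Ω) (u : ι → Ω → X) : Prop :=
  ∀ δ : ℝ≥0∞, 0 < δ → ∃ W : Set X, IsWeaklyCompact W ∧ ∀ i, μ (u i ⁻¹' W)ᶜ ≤ δ

theorem weaklyTight_zero (u : ι → Ω → X) : WeaklyTight (0 : Measure Ω) u := fun _ _ =>
  ⟨{0}, isWeaklyCompact_singleton 0, by simp⟩

theorem WeaklyTight.congr (h : WeaklyTight μ u) (huv : ∀ i, u i =ᵐ[μ] v i) : WeaklyTight μ v := by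
  intro δ hδ
  obtain ⟨W, hW, hWu⟩ := h δ hδ
  refine ⟨W, hW, fun i => (measure_mono_ae ?_).trans (hWu i)⟩
  filter_upwards [huv i] with ω hω hv hu
  exact hv (by rwa [mem_preimage, hω] at hu)

theorem WeaklyTight.mono_measure (h : WeaklyTight μ u) (hνμ : ν ≤ μ) :
    WeaklyTight ν u := fun δ hδ =>
  let ⟨W, hW, hWu⟩ := h δ hδ
  ⟨W, hW, fun i => (hνμ _).trans (hWu i)⟩

theorem WeaklyTight.comp {κ : Type*} (h : WeaklyTight μ u) (ψ : κ → ι) :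
    WeaklyTight μ (u ∘ ψ) := fun δ hδ =>
  let ⟨W, hW, hWu⟩ := h δ hδ
  ⟨W, hW, fun i => hWu (ψ i)⟩

theorem WeaklyTight.add_measure (hμ : WeaklyTight μ u) (hν : WeaklyTight ν u) :
    WeaklyTight (μ + ν) u := by
  intro δ hδ
  obtain ⟨W, hW, hWu⟩ := hμ (δ / 2) (ENNReal.half_pos hδ.ne')
  obtain ⟨V, hV, hVu⟩ := hν (δ / 2) (ENNReal.half_pos hδ.ne')
  refine ⟨W ∪ V, hW.union hV, fun i => ?_⟩
  rw [Measure.add_apply, ← ENNReal.add_halves δ]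
  exact add_le_add ((measure_mono (compl_subset_compl.2 (preimage_mono subset_union_left))).trans
    (hWu i)) ((measure_mono (compl_subset_compl.2 (preimage_mono subset_union_right))).trans
    (hVu i))

theorem weaklyTight_of_restrict_of_restrict_compl {B : Set Ω} (hB : MeasurableSet B)
    (h : WeaklyTight (μ.restrict B) u) (h' : WeaklyTight (μ.restrict Bᶜ) u) : WeaklyTight μ u := by
  rw [← Measure.restrict_add_restrict_compl (μ := μ) hB]
  exact h.add_measure h'

theorem WeaklyTight.finsetSum {κ : Type*} {m : κ → Measure Ω} (s : Finset κ)
    (h : ∀ k ∈ s, WeaklyTight (m k) u) : WeaklyTight (∑ k ∈ s, m k) u :=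
  Finset.sum_induction m (WeaklyTight · u) (fun _ _ hμ hν => hμ.add_measure hν)
    (weaklyTight_zero u) h

theorem WeaklyTight.sum {κ : Type*} [Countable κ] {m : κ → Measure Ω}
    [IsFiniteMeasure (Measure.sum m)] (h : ∀ k, WeaklyTight (m k) u) :
    WeaklyTight (Measure.sum m) u := by
  intro δ hδ
  have mass_ne_top : ∑' k, m k univ ≠ ∞ := by
    rw [← Measure.sum_apply m MeasurableSet.univ]
    exact measure_ne_top _ _
  obtain ⟨s, hs⟩ := ((ENNReal.tendsto_tsum_compl_atTop_zero mass_ne_top).eventually_le_const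
    (ENNReal.half_pos hδ.ne')).exists
  obtain ⟨W, hW, hWu⟩ := WeaklyTight.finsetSum s (fun k _ => h k) (δ / 2)
    (ENNReal.half_pos hδ.ne')
  refine ⟨W, hW, fun i => ?_⟩
  calc Measure.sum m (u i ⁻¹' W)ᶜ = ∑' k, m k (u i ⁻¹' W)ᶜ := Measure.sum_apply_of_countable m _
    _ = (∑ k ∈ s, m k) (u i ⁻¹' W)ᶜ + ∑' k : {k // k ∉ s}, m k (u i ⁻¹' W)ᶜ := by
        rw [Measure.finsetSum_apply]
        exact (ENNReal.sum_add_tsum_compl s _).symm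
    _ ≤ δ / 2 + δ / 2 :=
        add_le_add (hWu i) ((ENNReal.tsum_le_tsum fun k => measure_mono (subset_univ _)).trans hs)
    _ = δ := ENNReal.add_halves δ

theorem WeaklyTight.add (hu : WeaklyTight μ u) (hv : WeaklyTight μ v) :
    WeaklyTight μ (u + v) := by
  intro δ hδ
  obtain ⟨W, hW, hWu⟩ := hu (δ / 2) (ENNReal.half_pos hδ.ne')
  obtain ⟨V, hV, hVv⟩ := hv (δ / 2) (ENNReal.half_pos hδ.ne')
  refine ⟨W + V, hW.add hV, fun i => ?_⟩
  rw [← ENNReal.add_halves δ]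
  refine le_trans (measure_mono ?_) ((measure_union_le _ _).trans (add_le_add (hWu i) (hVv i)))
  rw [← compl_inter]
  exact compl_subset_compl.2 fun ω hω => Set.add_mem_add hω.1 hω.2

theorem weaklyTight_comp_measurePreserving_iff {Y : Type*} [MeasurableSpace Y] {ν : Measure Y}
    {F : Ω → Y} (hF : MeasurePreserving F μ ν) {w : ι → Y → X}
    (hw : ∀ i, AEStronglyMeasurable (w i) ν) :
    WeaklyTight μ (fun i => w i ∘ F) ↔ WeaklyTight ν w := by
  borelize X
  refine forall₂_congr fun δ _ => exists_congr fun W => and_congr_right fun hW =>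
    forall_congr' fun i => ?_
  rw [preimage_comp, ← preimage_compl, hF.measure_preimage
    ((hw i).aemeasurable.nullMeasurableSet_preimage hW.isClosed.measurableSet).compl]

theorem weaklyTight_coe_iff [IsProbabilityMeasure μ] {p : ℝ≥0∞} {K : Set (Lp X p μ)} :
    WeaklyTight μ (fun f : K => ((f : Lp X p μ) : Ω → X)) ↔
      ∀ δ : ℝ, 0 < δ → ∃ W : Set X, IsWeaklyCompact W ∧
        ∀ f ∈ K, 1 - ENNReal.ofReal δ ≤ μ ((f : Ω → X) ⁻¹' W) := by
  borelize X
  have measure_compl_le_iff {W : Set X} (hW : IsWeaklyCompact W) (f : Lp X p μ) (δ : ℝ≥0∞) :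
      μ ((f : Ω → X) ⁻¹' W)ᶜ ≤ δ ↔ 1 - δ ≤ μ ((f : Ω → X) ⁻¹' W) := by
    rw [prob_compl_eq_one_sub ((Lp.stronglyMeasurable f).measurable hW.isClosed.measurableSet),
      tsub_le_iff_tsub_le]
  constructor
  · intro h δ hδ
    obtain ⟨W, hW, hWK⟩ := h (ENNReal.ofReal δ) (ENNReal.ofReal_pos.2 hδ)
    exact ⟨W, hW, fun f hf => (measure_compl_le_iff hW f _).1 (hWK ⟨f, hf⟩)⟩
  · intro h δ hδ
    obtain ⟨r, -, hrδ⟩ := ENNReal.lt_iff_exists_real_btwn.1 hδ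
    obtain ⟨W, hW, hWK⟩ := h r (ENNReal.ofReal_pos.1 hrδ.1)
    exact ⟨W, hW, fun f => ((measure_compl_le_iff hW f.1 _).2 (hWK f f.2)).trans hrδ.2.le⟩

theorem weaklyTight_of_stronglyMeasurable [CompleteSpace X] [IsFiniteMeasure μ] {f : Ω → X}
    (hf : StronglyMeasurable f) : WeaklyTight μ fun _ : ι => f := by
  intro δ hδ
  borelize X
  have : CompleteSpace (closure (range f)) := isClosed_closure.completeSpace_coe
  have : SecondCountableTopology (closure (range f)) :=
    hf.isSeparable_range.closure.secondCountableTopology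
  let F : Ω → closure (range f) := fun ω => ⟨f ω, subset_closure (mem_range_self ω)⟩
  have measurable_F : Measurable F := hf.measurable.subtype_mk
  obtain ⟨K, hK, hKδ⟩ := isTightMeasureSet_iff_exists_isCompact_measure_compl_le.1
    (isTightMeasureSet_singleton (μ := μ.map F)) δ hδ
  refine ⟨(↑) '' K, isWeaklyCompact_of_isCompact (hK.image continuous_subtype_val), fun _ => ?_⟩
  refine le_trans ?_ (hKδ _ rfl)
  rw [Measure.map_apply measurable_F hK.measurableSet.compl]
  exact measure_mono fun ω hω hK => hω ⟨_, hK, rfl⟩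

end WeaklyTight

section Cutoff

theorem norm_indicator_id_le {E : Type*} [NormedAddCommGroup E] {s : Set E} {C : ℝ}
    (hs : ∀ x ∈ s, ‖x‖ ≤ C) (hC : 0 ≤ C) (x : E) : ‖s.indicator id x‖ ≤ C := by
  by_cases hx : x ∈ s
  · simpa [hx] using hs x hx
  · simpa [hx] using hC

theorem stronglyMeasurable_indicator_id_comp {E : Type*} [NormedAddCommGroup E] {s : Set E}
    (hs : IsClosed s) {f : Ω → E} (hf : StronglyMeasurable f) :
    StronglyMeasurable fun ω => s.indicator id (f ω) := by
  borelize E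
  exact hf.indicator (hf.measurable hs.measurableSet)

theorem memLp_top_indicator_id_comp {E : Type*} [NormedAddCommGroup E] {μ : Measure Ω} {s : Set E}
    (hs : IsClosed s) (hb : Bornology.IsBounded s) {f : Ω → E} (hf : StronglyMeasurable f) :
    MemLp (fun ω => s.indicator id (f ω)) ∞ μ := by
  obtain ⟨C, hC⟩ := hb.exists_norm_le
  exact memLp_top_of_bound (stronglyMeasurable_indicator_id_comp hs hf).aestronglyMeasurable |C|
    (ae_of_all _ fun ω => norm_indicator_id_le (fun x hx => (hC x hx).trans (le_abs_self C))
      (abs_nonneg C) _)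

/-- The bounded function obtained from `f` by replacing its values outside `s` by `0`: a truncation
when `s` is a ball, a restriction to the bulk of `f` when `s` is weakly compact. -/
def lpCutoff {E : Type*} [NormedAddCommGroup E] {μ : Measure Ω} {p : ℝ≥0∞} {s : Set E}
    (hs : IsClosed s) (hb : Bornology.IsBounded s) (f : Lp E p μ) : Lp E ∞ μ :=
  (memLp_top_indicator_id_comp hs hb (Lp.stronglyMeasurable f)).toLp

theorem coeFn_lpCutoff {E : Type*} [NormedAddCommGroup E] {μ : Measure Ω} {p : ℝ≥0∞} {s : Set E}
    (hs : IsClosed s) (hb : Bornology.IsBounded s) (f : Lp E p μ) :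
    lpCutoff hs hb f =ᵐ[μ] fun ω => s.indicator id (f ω) :=
  MemLp.coeFn_toLp _

theorem norm_lpCutoff_le {E : Type*} [NormedAddCommGroup E] {μ : Measure Ω} {p : ℝ≥0∞} {s : Set E}
    (hs : IsClosed s) (hb : Bornology.IsBounded s) {C : ℝ}
    (hsC : ∀ x ∈ s, ‖x‖ ≤ C) (hC : 0 ≤ C) (f : Lp E p μ) : ‖lpCutoff hs hb f‖ ≤ C := by
  refine norm_le_of_ae_norm_coeFn_le hC ?_
  filter_upwards [coeFn_lpCutoff hs hb f] with ω hω
  rw [hω]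
  exact norm_indicator_id_le hsC hC _

variable {μ : Measure Ω} [IsFiniteMeasure μ] {s : Set X} {p : ℝ≥0∞} {C : ℝ}

theorem norm_sub_lpCutoff_le {E : Type*} [NormedAddCommGroup E] {μ : Measure Ω} {s : Set E}
    (hs : IsClosed s) (hb : Bornology.IsBounded s) (f : Lp E ∞ μ) :
    ‖f - lpCutoff hs hb f‖ ≤ ‖f‖ := by
  refine Lp.norm_le_norm_of_ae_le ?_
  filter_upwards [Lp.coeFn_sub f (lpCutoff hs hb f), coeFn_lpCutoff hs hb f] with ω hsub hcut
  rw [hsub, Pi.sub_apply, hcut]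
  by_cases hω : f ω ∈ s <;> simp [hω]

theorem norm_lpInclusion_sub_lpCutoff_le (hs : IsClosed s) (hb : Bornology.IsBounded s)
    (f : Lp X ∞ μ) : ‖(lpInclusion le_top (f - lpCutoff hs hb f) : Lp X 1 μ)‖ ≤
      μ.real ((f : Ω → X) ⁻¹' s)ᶜ * ‖f‖ := by
  have measurableSet_preimage : MeasurableSet ((f : Ω → X) ⁻¹' s) := by
    borelize X
    exact (Lp.stronglyMeasurable f).measurable hs.measurableSet
  rw [L1.norm_eq_integral_norm, ← smul_eq_mul,
    ← integral_indicator_const _ measurableSet_preimage.compl, coeFn_lpInclusion]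
  refine integral_mono_of_nonneg (ae_of_all _ fun ω => norm_nonneg _)
    ((integrable_const _).indicator measurableSet_preimage.compl) ?_
  filter_upwards [Lp.coeFn_sub f (lpCutoff hs hb f), coeFn_lpCutoff hs hb f,
    ae_norm_coeFn_le_norm f] with ω hsub hcut hf
  rw [hsub, Pi.sub_apply, hcut]
  by_cases hω : f ω ∈ s
  · simp [hω]
  · simpa [hω] using hf

theorem IsWeaklyCompact.isBounded {W : Set X} (hW : IsWeaklyCompact W) : Bornology.IsBounded W :=
  isBounded_iff_forall_norm_le.2 hW.isRelWeaklyCompact.exists_norm_le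

theorem WeaklyTight.indicator_id_comp {ι : Type*} {μ : Measure Ω} {u : ι → Ω → X}
    (h : WeaklyTight μ u) (s : Set X) : WeaklyTight μ fun i ω => s.indicator id (u i ω) := by
  intro δ hδ
  obtain ⟨W, hW, hWu⟩ := h δ hδ
  refine ⟨{0} ∪ W, (isWeaklyCompact_singleton 0).union hW, fun i => (measure_mono ?_).trans (hWu i)⟩
  refine compl_subset_compl.2 fun ω hω => ?_
  by_cases hs : u i ω ∈ s
  · exact Or.inr (by simpa [hs] using hω)
  · exact Or.inl (by simp [hs])

/-- Only the convex combinations of a tight sequence need to converge, so the values outside a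
weakly compact set can be removed first. -/
theorem isRelWeaklyCompact_image_lpInclusion_top [CompleteSpace X] [Fact (1 ≤ p)] (hp : p ≠ ∞)
    {A : Set (Lp X ∞ μ)} (hC : ∀ f ∈ A, ‖f‖ ≤ C)
    (h : ∀ u : ℕ → Lp X ∞ μ, (∀ n, u n ∈ A) →
      ∃ ψ : ℕ → ℕ, StrictMono ψ ∧ WeaklyTight μ fun n => (u (ψ n) : Ω → X)) :
    IsRelWeaklyCompact ((lpInclusion le_top '' A : Set (Lp X p μ))) := by
  refine isRelWeaklyCompact_of_forall_seq ⟨‖(lpInclusion le_top : Lp X ∞ μ →L[ℝ] Lp X p μ)‖ * C, ?_⟩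
    fun u hu ε hε => ?_
  · rintro _ ⟨f, hf, rfl⟩
    exact (ContinuousLinearMap.le_opNorm _ f).trans (by gcongr; exact hC f hf)
  choose v hvA hvu using hu
  obtain ⟨ψ, hψ, ht⟩ := h v hvA
  obtain ⟨η, hη, hηε⟩ := exists_norm_lpInclusion_top_lt (X := X) (μ := μ) hp C hε
  have hC0 : 0 ≤ C := (norm_nonneg _).trans (hC _ (hvA 0))
  obtain ⟨W, hW, hWv⟩ := ht (ENNReal.ofReal (η / (C + 1))) (ENNReal.ofReal_pos.2 (by positivity))
  let w n := lpCutoff hW.isClosed hW.isBounded (v (ψ n))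
  refine ⟨ψ, hψ, fun n => lpInclusion le_top (w n), fun n => ?_,
    exists_mem_closure_convexHull_lpInclusion_top hp ((isWeaklyCompact_singleton 0).union hW)
      fun n => ?_⟩
  · have measure_le : μ.real ((v (ψ n) : Ω → X) ⁻¹' W)ᶜ ≤ η / (C + 1) :=
      ENNReal.toReal_le_of_le_ofReal (by positivity) (hWv n)
    rw [← hvu, norm_sub_rev, ← map_sub]
    refine (hηε _ ((norm_sub_lpCutoff_le _ _ _).trans (hC _ (hvA _))) ?_).le
    calc _ ≤ μ.real ((v (ψ n) : Ω → X) ⁻¹' W)ᶜ * ‖v (ψ n)‖ := norm_lpInclusion_sub_lpCutoff_le _ _ _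
      _ ≤ η / (C + 1) * C := by gcongr; exact hC _ (hvA _)
      _ < η := by
        rw [div_mul_eq_mul_div, div_lt_iff₀ (by positivity)]
        linarith [mul_add η C 1]
  · filter_upwards [coeFn_lpCutoff hW.isClosed hW.isBounded (v (ψ n))] with ω hω
    rw [hω]
    by_cases h : v (ψ n) ω ∈ W <;> simp [h]

theorem weaklyTight_of_forall_cutoff {ι : Type*} {μ : Measure Ω} {f : ι → Lp X 1 μ}
    (hC : ∀ i, ‖f i‖ ≤ C)
    (h : ∀ R : ℝ, 0 < R →
      WeaklyTight μ fun i ω => (Metric.closedBall (0 : X) R).indicator id (f i ω)) :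
    WeaklyTight μ fun i => (f i : Ω → X) := by
  intro δ hδ
  obtain ⟨R, hR, hfR⟩ := exists_measure_le_norm_le (E := X) (μ := μ) C (ENNReal.half_pos hδ.ne')
  obtain ⟨W, hW, hWf⟩ := h R hR (δ / 2) (ENNReal.half_pos hδ.ne')
  refine ⟨W, hW, fun i => ?_⟩
  calc μ ((f i : Ω → X) ⁻¹' W)ᶜ ≤ μ ({ω | R ≤ ‖f i ω‖} ∪
        ((fun ω => (Metric.closedBall (0 : X) R).indicator id (f i ω)) ⁻¹' W)ᶜ) := by
        refine measure_mono fun ω hω => ?_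
        rcases le_or_gt R ‖f i ω‖ with hRω | hRω
        · exact Or.inl hRω
        · exact Or.inr (by simpa [hRω.le] using hω)
    _ ≤ δ / 2 + δ / 2 := (measure_union_le _ _).trans (add_le_add (hfR _ (hC i)) (hWf i))
    _ = δ := ENNReal.add_halves δ

end Cutoff

section Transport

open ProbabilityTheory

theorem continuous_cdf (ν : Measure ℝ) [IsProbabilityMeasure ν] [NullSingletonClass ν] :
    Continuous (cdf ν) := by
  refine continuous_iff_continuousAt.2 fun x => ?_
  rw [(monotone_cdf ν).continuousAt_iff_leftLim_eq_rightLim, StieltjesFunction.rightLim_eq]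
  have jump_eq_zero := (cdf ν).measure_singleton x
  rw [measure_cdf, measure_singleton, eq_comm, ENNReal.ofReal_eq_zero] at jump_eq_zero
  exact le_antisymm ((monotone_cdf ν).leftLim_le le_rfl) (by linarith)

theorem measure_setOf_cdf_le (ν : Measure ℝ) [IsProbabilityMeasure ν] [NullSingletonClass ν]
    {a : ℝ} (ha0 : 0 ≤ a) (ha1 : a ≤ 1) : ν {x | cdf ν x ≤ a} = ENNReal.ofReal a := by
  rcases ha1.eq_or_lt with rfl | ha1
  · simp [cdf_le_one]
  obtain ⟨b, hab⟩ := ((tendsto_cdf_atTop ν).eventually_const_lt ha1).exists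
  have bddAbove : b ∈ upperBounds {x | cdf ν x ≤ a} := fun x hx =>
    ((monotone_cdf ν).reflect_lt (lt_of_le_of_lt hx hab)).le
  rcases {x | cdf ν x ≤ a}.eq_empty_or_nonempty with hemp | hne
  · have : a ≤ 0 := ge_of_tendsto' (tendsto_cdf_atBot ν) fun x =>
      (not_le.1 (eq_empty_iff_forall_notMem.1 hemp x)).le
    rw [hemp, measure_empty, ENNReal.ofReal_of_nonpos this]
  · have isGreatest := (isClosed_le (continuous_cdf ν) continuous_const).isGreatest_csSup hne
      ⟨b, bddAbove⟩
    set x := sSup {x | cdf ν x ≤ a}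
    obtain ⟨y, hy⟩ := mem_range_of_exists_le_of_exists_ge (continuous_cdf ν) ⟨x, isGreatest.1⟩
      ⟨b, hab.le⟩
    have setOf_eq : {x | cdf ν x ≤ a} = Iic x := Subset.antisymm isGreatest.2 fun z hz =>
      (monotone_cdf ν hz).trans isGreatest.1
    have cdf_eq : cdf ν x = a :=
      le_antisymm isGreatest.1 (hy.ge.trans (monotone_cdf ν (isGreatest.2 hy.le)))
    rw [setOf_eq, ← ofReal_cdf, cdf_eq]

theorem exists_measurePreserving_unitInterval (ν : Measure ℝ) [IsProbabilityMeasure ν]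
    [NullSingletonClass ν] : ∃ G : ℝ → unitInterval, MeasurePreserving G ν volume := by
  let G : ℝ → unitInterval := fun x => ⟨cdf ν x, cdf_nonneg ν x, cdf_le_one ν x⟩
  have hG : Measurable G := ((continuous_cdf ν).subtype_mk _).measurable
  have := Measure.isProbabilityMeasure_map (μ := ν) hG.aemeasurable
  refine ⟨G, hG, Measure.ext_of_Iic _ _ fun a => ?_⟩
  rw [Measure.map_apply hG measurableSet_Iic, unitInterval.volume_Iic]
  exact measure_setOf_cdf_le ν a.2.1 a.2.2

theorem exists_measurePreserving_of_isProbabilityMeasure {Y : Type*} [MeasurableSpace Y]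
    [StandardBorelSpace Y] (ν : Measure ℝ) [IsProbabilityMeasure ν] [NullSingletonClass ν]
    (σ : Measure Y) [IsProbabilityMeasure σ] : ∃ f : ℝ → Y, MeasurePreserving f ν σ := by
  have : Nonempty Y := nonempty_of_isProbabilityMeasure σ
  obtain ⟨G, hG⟩ := exists_measurePreserving_unitInterval ν
  obtain ⟨f, hf, hfσ⟩ := σ.exists_measurable_map_eq
  exact ⟨f ∘ G, MeasurePreserving.comp ⟨hf, hfσ⟩ hG⟩

theorem exists_measurePreserving {Y : Type*} [MeasurableSpace Y] [StandardBorelSpace Y]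
    [Nonempty Y] {ν : Measure ℝ} [IsFiniteMeasure ν] [NullSingletonClass ν] {σ : Measure Y}
    (h : ν univ = σ univ) : ∃ f : ℝ → Y, MeasurePreserving f ν σ := by
  obtain ⟨y⟩ := ‹Nonempty Y›
  rcases eq_or_ne ν 0 with rfl | hν
  · have : σ = 0 := Measure.measure_univ_eq_zero.1 (by simpa using h.symm)
    exact ⟨fun _ => y, measurable_const, by simp [this]⟩
  have mass_ne_zero : ν univ ≠ 0 := by simpa using hν
  have : IsProbabilityMeasure ((ν univ)⁻¹ • ν) :=
    ⟨ENNReal.inv_mul_cancel mass_ne_zero (measure_ne_top _ _)⟩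
  have : NullSingletonClass ((ν univ)⁻¹ • ν) := ⟨fun x => by simp⟩
  have : IsProbabilityMeasure ((ν univ)⁻¹ • σ) :=
    ⟨by simpa [← h] using ENNReal.inv_mul_cancel mass_ne_zero (measure_ne_top _ _)⟩
  obtain ⟨f, hf⟩ := exists_measurePreserving_of_isProbabilityMeasure ((ν univ)⁻¹ • ν)
    ((ν univ)⁻¹ • σ)
  exact ⟨f, by
    simpa only [smul_smul, ENNReal.mul_inv_cancel mass_ne_zero (measure_ne_top ν _), one_smul]
      using hf.smul_measure (ν univ)⟩

theorem exists_measurable_real_factorization {E : Type*} [NormedAddCommGroup E] [CompleteSpace E]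
    {f : ℕ → Ω → E} (hf : ∀ n, StronglyMeasurable (f n)) :
    ∃ F : Ω → ℝ, Measurable F ∧ ∃ g : ℕ → ℝ → E, (∀ n, StronglyMeasurable (g n)) ∧
      ∀ n, f n = g n ∘ F := by
  borelize E
  let M n := closure (range (f n))
  have secondCountable n : SecondCountableTopology (M n) :=
    (hf n).isSeparable_range.closure.secondCountableTopology
  have completeSpace n : CompleteSpace (M n) := isClosed_closure.completeSpace_coe
  have standardBorel n : StandardBorelSpace (M n) := inferInstance
  let F₀ : Ω → ∀ n, M n := fun ω n => ⟨f n ω, subset_closure (mem_range_self ω)⟩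
  have hF₀ : Measurable F₀ := measurable_pi_lambda _ fun n => (hf n).measurable.subtype_mk
  have embedding := measurableEmbedding_embeddingReal (∀ n, M n)
  have exists_extension n := embedding.exists_stronglyMeasurable_extend
    (f := fun z : ∀ n, M n => (z n : E)) (continuous_subtype_val.stronglyMeasurable.comp_measurable
      (measurable_pi_apply n)) fun _ => ⟨0⟩
  choose g hg hgF using exists_extension
  exact ⟨embeddingReal (∀ n, M n) ∘ F₀, embedding.measurable.comp hF₀, g, hg, fun n => by
    rw [← Function.comp_assoc, hgF]; rfl⟩

end Transport

section RandomSigns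

theorem stronglyMeasurable_linearCombination {ι E : Type*} [NormedAddCommGroup E] [NormedSpace ℝ E]
    {v : ι → Ω → E} (hv : ∀ i, StronglyMeasurable (v i)) (a : ι →₀ ℝ) :
    StronglyMeasurable fun ω => Finsupp.linearCombination ℝ (fun i => v i ω) a :=
  Finset.stronglyMeasurable_fun_sum _ fun i _ => (hv i).const_smul _

variable {Θ : Type*} [MeasurableSpace Θ] {κ : Measure Θ}

/-- Random signs: functions with values `±1` whose joint law does not change when some of them are
replaced by their negatives. The invariance is realized by measure preserving maps of the
underlying space instead of being stated for the law. -/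
structure IsRandomSigns {ι : Type*} (κ : Measure Θ) (e : ι → Θ → ℝ) : Prop where
  measurable : ∀ i, Measurable (e i)
  eq_or : ∀ i θ, e i θ = 1 ∨ e i θ = -1
  exists_flip : ∀ s : ι → ℝ, (∀ i, s i = 1 ∨ s i = -1) →
    ∃ τ : Θ → Θ, MeasurePreserving τ κ κ ∧ ∀ i θ, e i (τ θ) = s i * e i θ

namespace IsRandomSigns

variable {ι : Type*} {e : ι → Θ → ℝ}

theorem norm_eq_one (he : IsRandomSigns κ e) (i : ι) (θ : Θ) : ‖e i θ‖ = 1 := by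
  rcases he.eq_or i θ with h | h <;> simp [h]

theorem weakTendsto_smul (he : IsRandomSigns κ e) {Z : Type*} [NormedAddCommGroup Z]
    [NormedSpace ℝ Z] {l : Filter ι} {f : ι → Z} (hf : WeakTendsto f l 0) (θ : Θ) :
    WeakTendsto (fun k => e k θ • f k) l 0 := by
  refine weakTendsto_zero_iff.2 fun φ => ?_
  refine squeeze_zero_norm (fun k => ?_) (tendsto_zero_iff_norm_tendsto_zero.1
    (weakTendsto_zero_iff.1 hf φ))
  rw [map_smul, norm_smul, he.norm_eq_one, one_mul]

theorem comp_injective (he : IsRandomSigns κ e) {ι' : Type*} {ψ : ι' → ι}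
    (hψ : Function.Injective ψ) : IsRandomSigns κ (e ∘ ψ) where
  measurable i := he.measurable _
  eq_or i := he.eq_or _
  exists_flip s hs := by
    obtain ⟨τ, hτ, hτe⟩ := he.exists_flip (Function.extend ψ s 1) fun i => by
      by_cases h : ∃ k, ψ k = i
      · obtain ⟨k, rfl⟩ := h
        rw [hψ.extend_apply]
        exact hs k
      · rw [Function.extend_apply' _ _ _ h]
        exact Or.inl rfl
    exact ⟨τ, hτ, fun i θ => by rw [Function.comp_apply, hτe, hψ.extend_apply]⟩

/-- Contraction principle: the dropped terms cancel in the average of the given sum and the one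
with the signs of these terms flipped. -/
theorem lintegral_linearCombination_le {Z : Type*} [NormedAddCommGroup Z] [NormedSpace ℝ Z]
    (he : IsRandomSigns κ e) {z z' : ι → Z} (h : ∀ i, z' i = z i ∨ z' i = 0) (a : ι →₀ ℝ) :
    ∫⁻ θ, ‖Finsupp.linearCombination ℝ (fun i => e i θ • z' i) a‖ₑ ∂κ ≤
      ∫⁻ θ, ‖Finsupp.linearCombination ℝ (fun i => e i θ • z i) a‖ₑ ∂κ := by
  classical
  set S : Θ → Z := fun θ => Finsupp.linearCombination ℝ (fun i => e i θ • z i) a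
  have hS : Measurable fun θ => ‖S θ‖ₑ := (stronglyMeasurable_linearCombination
    (fun i => (he.measurable i).stronglyMeasurable.smul_const _) a).enorm
  obtain ⟨τ, hτ, hτe⟩ := he.exists_flip (fun i => if z' i = z i then 1 else -1) fun i => by
    split_ifs <;> simp
  have average θ : Finsupp.linearCombination ℝ (fun i => e i θ • z' i) a =
      (2⁻¹ : ℝ) • (S θ + S (τ θ)) := by
    simp only [S, Finsupp.linearCombination_apply, Finsupp.sum, ← Finset.sum_add_distrib,
      Finset.smul_sum, hτe]
    refine Finset.sum_congr rfl fun i _ => ?_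
    by_cases hi : z' i = z i
    · rw [if_pos hi, hi]
      module
    · rw [if_neg hi, (h i).resolve_left hi]
      module
  have enorm_half : ‖(2⁻¹ : ℝ)‖ₑ = 2⁻¹ := by
    rw [enorm_inv two_ne_zero, Real.enorm_of_nonneg zero_le_two, ENNReal.ofReal_ofNat]
  calc ∫⁻ θ, ‖Finsupp.linearCombination ℝ (fun i => e i θ • z' i) a‖ₑ ∂κ
      ≤ ∫⁻ θ, 2⁻¹ * (‖S θ‖ₑ + ‖S (τ θ)‖ₑ) ∂κ := by
        refine lintegral_mono fun θ => ?_
        rw [average, enorm_smul, enorm_half]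
        gcongr
        exact enorm_add_le _ _
    _ = 2⁻¹ * (∫⁻ θ, ‖S θ‖ₑ ∂κ + ∫⁻ θ, ‖S θ‖ₑ ∂κ) := by
        rw [lintegral_const_mul' _ _ (by simp), lintegral_add_left hS, hτ.lintegral_comp hS]
    _ = ∫⁻ θ, ‖S θ‖ₑ ∂κ := by
        rw [← two_mul, ← mul_assoc, ENNReal.inv_mul_cancel (by simp) (by simp), one_mul]

end IsRandomSigns

theorem exists_isRandomSigns : ∃ (κ : Measure (ℕ → ZMod 2)) (e : ℕ → (ℕ → ZMod 2) → ℝ),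
    IsProbabilityMeasure κ ∧ IsRandomSigns κ e := by
  refine ⟨Measure.addHaarMeasure ⊤, fun n θ => if θ n = 0 then 1 else -1,
    ⟨Measure.addHaarMeasure_self⟩, fun n => ?_, fun n θ => ?_, fun s hs => ?_⟩
  · exact (measurable_of_countable fun a : ZMod 2 => if a = 0 then (1 : ℝ) else -1).comp
      (measurable_pi_apply n)
  · split_ifs <;> simp
  · refine ⟨fun θ => θ + fun n => if s n = 1 then 0 else 1, measurePreserving_add_right _ _,
      fun n θ => ?_⟩
    have eq_zero_or_one : ∀ a : ZMod 2, a = 0 ∨ a = 1 := by decide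
    have one_add_one : (1 : ZMod 2) + 1 = 0 := by decide
    rcases hs n with h | h <;> rcases eq_zero_or_one (θ n) with h' | h' <;>
      norm_num [h, h', one_add_one]

theorem convexHull_range_eq_image_linearCombination {ι Z : Type*} [AddCommGroup Z] [Module ℝ Z]
    (u : ι → Z) : convexHull ℝ (range u) =
      Finsupp.linearCombination ℝ u '' convexHull ℝ (range fun i => Finsupp.single i (1 : ℝ)) := by
  rw [LinearMap.image_convexHull, ← range_comp]
  simp [Function.comp_def]

theorem coeFn_linearCombination {ι E : Type*} [NormedAddCommGroup E] [NormedSpace ℝ E]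
    {μ : Measure Ω} {p : ℝ≥0∞} {u : ι → Lp E p μ} {v : ι → Ω → E} (h : ∀ i, u i =ᵐ[μ] v i)
    (a : ι →₀ ℝ) : Finsupp.linearCombination ℝ u a =ᵐ[μ]
      fun ω => Finsupp.linearCombination ℝ (fun i => v i ω) a := by
  have coeFn_smul : ∀ᵐ ω ∂μ, ∀ i ∈ a.support, (a i • u i : Lp E p μ) ω = a i • v i ω := by
    refine (Finset.eventually_all _).2 fun i _ => ?_
    filter_upwards [Lp.coeFn_smul (a i) (u i), h i] with ω hsmul hω
    rw [hsmul, Pi.smul_apply, hω]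
  filter_upwards [Lp.coeFn_finsetSum a.support fun i => a i • u i, coeFn_smul] with ω hsum hω
  exact hsum.trans ((Finset.sum_apply _ _ _).trans (Finset.sum_congr rfl hω))

theorem enorm_linearCombination_one {ι E : Type*} [NormedAddCommGroup E] [NormedSpace ℝ E]
    {μ : Measure Ω} {u : ι → Lp E 1 μ} {v : ι → Ω → E} (h : ∀ i, u i =ᵐ[μ] v i) (a : ι →₀ ℝ) :
    ‖Finsupp.linearCombination ℝ u a‖ₑ =
      ∫⁻ ω, ‖Finsupp.linearCombination ℝ (fun i => v i ω) a‖ₑ ∂μ := by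
  rw [Lp.enorm_def, eLpNorm_one_eq_lintegral_enorm]
  exact lintegral_congr_ae ((coeFn_linearCombination h a).mono fun ω hω => congrArg _ hω)

theorem exists_lintegral_signed_linearCombination_lt [IsFiniteMeasure κ] {e : ℕ → Θ → ℝ}
    (he : IsRandomSigns κ e) {Z : Type*} [NormedAddCommGroup Z] [NormedSpace ℝ Z] {f : ℕ → Z}
    (hf : WeakTendsto f atTop 0) {ε : ℝ} (hε : 0 < ε) :
    ∃ a ∈ convexHull ℝ (range fun k => Finsupp.single k (1 : ℝ)),
      ∫⁻ θ, ‖Finsupp.linearCombination ℝ (fun k => e k θ • f k) a‖ₑ ∂κ < ENNReal.ofReal ε := by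
  obtain ⟨C, hC⟩ := hf.isRelWeaklyCompact_range.exists_norm_le
  have norm_le k θ : ‖e k θ • f k‖ ≤ C := by
    rw [norm_smul, he.norm_eq_one, one_mul]
    exact hC _ (mem_range_self k)
  have memLp k : MemLp (fun θ => e k θ • f k) ∞ κ := memLp_top_of_bound
    ((he.measurable k).stronglyMeasurable.smul_const _).aestronglyMeasurable C
    (ae_of_all _ (norm_le k))
  let u : ℕ → Lp Z ∞ κ := fun k => (memLp k).toLp
  have coeFn_u k : u k =ᵐ[κ] fun θ => e k θ • f k := (memLp k).coeFn_toLp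
  have norm_u_le k : ‖u k‖ ≤ C :=
    norm_le_of_ae_norm_coeFn_le ((norm_nonneg _).trans (hC _ (mem_range_self 0)))
      ((coeFn_u k).mono fun θ hθ => hθ ▸ norm_le k θ)
  have weakTendsto_u : ∀ᵐ θ ∂κ, WeakTendsto (fun k => u k θ) atTop ((0 : Lp Z ∞ κ) θ) := by
    filter_upwards [ae_all_iff.2 coeFn_u, Lp.coeFn_zero Z ∞ κ] with θ hθ h0
    simpa only [hθ, h0, Pi.zero_apply] using he.weakTendsto_smul hf θ
  have weakTendsto_inclusion := weakTendsto_lpInclusion_top_one norm_u_le weakTendsto_u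
  rw [map_zero] at weakTendsto_inclusion
  obtain ⟨y, hy, hyε⟩ := weakTendsto_inclusion.exists_mem_convexHull_norm_lt 0 hε
  rw [show Ici 0 = univ from Ici_bot, image_univ,
    convexHull_range_eq_image_linearCombination] at hy
  obtain ⟨a, ha, rfl⟩ := hy
  refine ⟨a, ha, ?_⟩
  rw [← enorm_linearCombination_one (u := fun k => (lpInclusion le_top (u k) : Lp Z 1 κ)) coeFn_u,
    ← ofReal_norm]
  exact (ENNReal.ofReal_lt_ofReal_iff hε).2 hyε

end RandomSigns

section SignedCutoff

variable {Θ : Type*} [MeasurableSpace Θ] {κ : Measure Θ} {μ : Measure Ω} {e : ℕ → Θ → ℝ}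
  {s : Set X}

theorem IsRandomSigns.stronglyMeasurable_smul_indicator (he : IsRandomSigns κ e) (hs : IsClosed s)
    {v : ℕ → Ω → X} (hv : ∀ k, StronglyMeasurable (v k)) (k : ℕ) :
    StronglyMeasurable fun z : Θ × Ω => e k z.1 • s.indicator id (v k z.2) :=
  ((he.measurable k).stronglyMeasurable.comp_measurable measurable_fst).smul
    ((stronglyMeasurable_indicator_id_comp hs (hv k)).comp_measurable measurable_snd)

theorem IsRandomSigns.exists_lp_top_smul_indicator (he : IsRandomSigns κ e) (hs : IsClosed s)
    {C : ℝ} (hsC : ∀ x ∈ s, ‖x‖ ≤ C) (hC : 0 ≤ C) {v : ℕ → Ω → X}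
    (hv : ∀ k, StronglyMeasurable (v k)) :
    ∃ u : ℕ → Lp X ∞ (κ.prod μ), (∀ k, ‖u k‖ ≤ C) ∧
      ∀ k, u k =ᵐ[κ.prod μ] fun z => e k z.1 • s.indicator id (v k z.2) := by
  have norm_le k (z : Θ × Ω) : ‖e k z.1 • s.indicator id (v k z.2)‖ ≤ C := by
    rw [norm_smul, he.norm_eq_one, one_mul]
    exact norm_indicator_id_le hsC hC _
  have memLp k : MemLp (fun z => e k z.1 • s.indicator id (v k z.2)) ∞ (κ.prod μ) :=
    memLp_top_of_bound (he.stronglyMeasurable_smul_indicator hs hv k).aestronglyMeasurable C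
      (ae_of_all _ (norm_le k))
  exact ⟨fun k => (memLp k).toLp, fun k => norm_le_of_ae_norm_coeFn_le hC
    ((memLp k).coeFn_toLp.mono fun z hz => hz ▸ norm_le k z), fun k => (memLp k).coeFn_toLp⟩

theorem IsRandomSigns.lintegral_prod_smul_indicator_le [SFinite κ] [SFinite μ]
    (he : IsRandomSigns κ e) (hs : IsClosed s) (g : ℕ → Lp X 1 μ) (a : ℕ →₀ ℝ) :
    ∫⁻ z, ‖Finsupp.linearCombination ℝ (fun k => e k z.1 • s.indicator id (g k z.2)) a‖ₑ
        ∂(κ.prod μ) ≤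
      ∫⁻ θ, ‖Finsupp.linearCombination ℝ (fun k => e k θ • g k) a‖ₑ ∂κ := by
  have stronglyMeasurable_g k : StronglyMeasurable (g k) := Lp.stronglyMeasurable (g k)
  calc _ = ∫⁻ ω, ∫⁻ θ, ‖Finsupp.linearCombination ℝ
          (fun k => e k θ • s.indicator id (g k ω)) a‖ₑ ∂κ ∂μ :=
        lintegral_prod_symm _ (stronglyMeasurable_linearCombination
          (he.stronglyMeasurable_smul_indicator hs stronglyMeasurable_g) a).enorm.aemeasurable
    _ ≤ ∫⁻ ω, ∫⁻ θ, ‖Finsupp.linearCombination ℝ (fun k => e k θ • g k ω) a‖ₑ ∂κ ∂μ :=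
        lintegral_mono fun ω => he.lintegral_linearCombination_le
          (fun k => (indicator_eq_zero_or_self s id (g k ω)).symm) a
    _ = ∫⁻ θ, ∫⁻ ω, ‖Finsupp.linearCombination ℝ (fun k => e k θ • g k ω) a‖ₑ ∂μ ∂κ := by
        refine lintegral_lintegral_swap (StronglyMeasurable.enorm ?_).aemeasurable
        exact stronglyMeasurable_linearCombination (fun k =>
          ((he.measurable k).stronglyMeasurable.comp_measurable measurable_snd).smul
            ((stronglyMeasurable_g k).comp_measurable measurable_fst)) a
    _ = ∫⁻ θ, ‖Finsupp.linearCombination ℝ (fun k => e k θ • g k) a‖ₑ ∂κ :=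
        lintegral_congr fun θ =>
          (enorm_linearCombination_one (fun k => Lp.coeFn_smul (e k θ) (g k)) a).symm

theorem IsRandomSigns.exists_weakTendsto_smul_indicator [IsFiniteMeasure κ] [IsFiniteMeasure μ]
    (he : IsRandomSigns κ e) {p : ℝ≥0∞} [Fact (1 ≤ p)] (hp : p ≠ ∞) (hs : IsClosed s)
    (hb : Bornology.IsBounded s) {g : ℕ → Lp X 1 μ} (hg : WeakTendsto g atTop 0) :
    ∃ h : ℕ → Lp X p (κ.prod μ), WeakTendsto h atTop 0 ∧
      ∀ k, h k =ᵐ[κ.prod μ] fun z => e k z.1 • s.indicator id (g k z.2) := by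
  obtain ⟨C, hC, hsC⟩ := hb.exists_pos_norm_le
  obtain ⟨u, norm_u_le, coeFn_u⟩ := he.exists_lp_top_smul_indicator (κ := κ) (μ := μ) hs hsC hC.le
    fun k => Lp.stronglyMeasurable (g k)
  refine ⟨fun k => lpInclusion le_top (u k),
    weakTendsto_zero_of_forall_subseq_convexHull fun ψ hψ ε hε => ?_, coeFn_u⟩
  obtain ⟨η, hη, lt_of_lt⟩ := exists_norm_lpInclusion_top_lt (X := X) (μ := κ.prod μ) hp C hε
  have heψ : IsRandomSigns κ (e ∘ ψ) := he.comp_injective hψ.injective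
  obtain ⟨a, ha, haη⟩ := exists_lintegral_signed_linearCombination_lt heψ
    (hg.comp hψ.tendsto_atTop) hη
  let y : Lp X ∞ (κ.prod μ) := Finsupp.linearCombination ℝ (u ∘ ψ) a
  have y_mem : y ∈ convexHull ℝ (range (u ∘ ψ)) := by
    rw [convexHull_range_eq_image_linearCombination]
    exact mem_image_of_mem _ ha
  refine ⟨lpInclusion le_top y, ?_, lt_of_lt y ?_ ?_⟩
  · rw [← image_univ] at y_mem ⊢
    exact (convexHull_lpInclusion_image le_top (u ∘ ψ) univ).superset (mem_image_of_mem _ y_mem)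
  · refine mem_closedBall_zero_iff.1 (convexHull_min ?_ (convex_closedBall _ _) y_mem)
    exact range_subset_iff.2 fun k => mem_closedBall_zero_iff.2 (norm_u_le (ψ k))
  · have enorm_y : ‖(lpInclusion le_top y : Lp X 1 (κ.prod μ))‖ₑ =
        ∫⁻ z, ‖Finsupp.linearCombination ℝ
          (fun k => e (ψ k) z.1 • s.indicator id (g (ψ k) z.2)) a‖ₑ ∂(κ.prod μ) := by
      rw [Lp.enorm_def, coeFn_lpInclusion, eLpNorm_one_eq_lintegral_enorm]
      exact lintegral_congr_ae
        ((coeFn_linearCombination (fun k => coeFn_u (ψ k)) a).mono fun z hz => congrArg _ hz)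
    rw [← ENNReal.ofReal_lt_ofReal_iff hη, ofReal_norm, enorm_y]
    exact (heψ.lintegral_prod_smul_indicator_le hs (g ∘ ψ) a).trans_lt haη

end SignedCutoff

section WeaklyNullTight

variable {Y : Type*} [MeasurableSpace Y] {μ : Measure Ω} {ν : Measure Y} {p : ℝ≥0∞}

/-- Every weakly null sequence in `L^p(μ, X)` is weakly tight. -/
def WeaklyNullTight (p : ℝ≥0∞) [Fact (1 ≤ p)] (μ : Measure Ω) (X : Type*) [NormedAddCommGroup X]
    [NormedSpace ℝ X] : Prop :=
  ∀ f : ℕ → Lp X p μ, WeakTendsto f atTop 0 → WeaklyTight μ fun n => (f n : Ω → X)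

theorem weaklyTight_compMeasurePreserving_iff {Ψ : Ω → Y} (hΨ : MeasurePreserving Ψ μ ν)
    (f : ℕ → Lp X p ν) :
    WeaklyTight μ (fun n => (Lp.compMeasurePreserving Ψ hΨ (f n) : Ω → X)) ↔
      WeaklyTight ν fun n => (f n : Y → X) := by
  rw [← weaklyTight_comp_measurePreserving_iff hΨ fun n => Lp.aestronglyMeasurable (f n)]
  have coeFn_comp n := Lp.coeFn_compMeasurePreserving (f n) hΨ
  exact ⟨fun h => h.congr coeFn_comp, fun h => h.congr fun n => (coeFn_comp n).symm⟩

theorem memLp_indicator_coeFn {E : Type*} [NormedAddCommGroup E] {B : Set Ω}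
    (hB : MeasurableSet B) (f : Lp E p (μ.restrict B)) : MemLp (B.indicator f) p μ :=
  (memLp_indicator_iff_restrict hB).2 (Lp.memLp f)

variable [Fact (1 ≤ p)]

theorem WeaklyNullTight.of_measurePreserving {Ψ : Ω → Y} (hΨ : MeasurePreserving Ψ μ ν)
    (h : WeaklyNullTight p μ X) : WeaklyNullTight p ν X := fun f hf =>
  (weaklyTight_compMeasurePreserving_iff hΨ f).1 <|
    h _ ((weakTendsto_zero_linearIsometry_comp_iff (Lp.compMeasurePreservingₗᵢ ℝ Ψ hΨ)).2 hf)

theorem WeaklyNullTight.weaklyTight_of_comp {Ψ : Ω → Y} (hΨ : MeasurePreserving Ψ μ ν)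
    (h : WeaklyNullTight p ν X) {f : ℕ → Lp X p μ} (hf : WeakTendsto f atTop 0) {g : ℕ → Y → X}
    (hg : ∀ n, StronglyMeasurable (g n)) (hfg : ∀ n, f n = g n ∘ Ψ) :
    WeaklyTight μ fun n => (f n : Ω → X) := by
  have memLp n : MemLp (g n) p ν := by
    rw [← hΨ.map_eq, memLp_map_measure_iff ((hg n).mono le_rfl).aestronglyMeasurable
      hΨ.measurable.aemeasurable, ← hfg]
    exact Lp.memLp (f n)
  have comp_eq n : Lp.compMeasurePreserving Ψ hΨ (memLp n).toLp = f n := by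
    refine Lp.ext ((Lp.coeFn_compMeasurePreserving _ hΨ).trans ?_)
    rw [hfg]
    exact hΨ.quasiMeasurePreserving.ae_eq_comp (memLp n).coeFn_toLp
  obtain rfl : (fun n => Lp.compMeasurePreserving Ψ hΨ (memLp n).toLp) = f := funext comp_eq
  exact (weaklyTight_compMeasurePreserving_iff hΨ _).2 <|
    h _ ((weakTendsto_zero_linearIsometry_comp_iff (Lp.compMeasurePreservingₗᵢ ℝ Ψ hΨ)).1 hf)

/-- Extension by zero of a function on `B` to the whole space. -/
def lpExtendZero {B : Set Ω} (hB : MeasurableSet B) :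
    Lp X p (μ.restrict B) →ₗᵢ[ℝ] Lp X p μ where
  toFun f := (memLp_indicator_coeFn hB f).toLp
  map_add' f g := by
    rw [← MemLp.toLp_add, MemLp.toLp_eq_toLp_iff, ← indicator_add',
      ← ae_eq_restrict_iff_indicator_ae_eq hB]
    exact Lp.coeFn_add f g
  map_smul' c f := by
    rw [RingHom.id_apply, ← MemLp.toLp_const_smul, MemLp.toLp_eq_toLp_iff,
      show c • B.indicator f = B.indicator (c • ⇑f) from (indicator_const_smul B c f).symm,
      ← ae_eq_restrict_iff_indicator_ae_eq hB]
    exact Lp.coeFn_smul c f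
  norm_map' f := by
    change ‖(memLp_indicator_coeFn hB f).toLp‖ = ‖f‖
    rw [Lp.norm_toLp, eLpNorm_indicator_eq_eLpNorm_restrict hB, Lp.norm_def]

theorem coeFn_lpExtendZero {B : Set Ω} (hB : MeasurableSet B) (f : Lp X p (μ.restrict B)) :
    lpExtendZero hB f =ᵐ[μ.restrict B] f :=
  ((memLp_indicator_coeFn hB f).coeFn_toLp.filter_mono ae_restrict_le).trans
    (indicator_ae_eq_restrict hB)

theorem WeaklyNullTight.restrict (h : WeaklyNullTight p μ X) {B : Set Ω} (hB : MeasurableSet B) :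
    WeaklyNullTight p (μ.restrict B) X := fun f hf =>
  ((h _ ((weakTendsto_zero_linearIsometry_comp_iff (lpExtendZero hB)).2 hf)).mono_measure
    Measure.restrict_le_self).congr fun n => coeFn_lpExtendZero hB (f n)

theorem WeaklyNullTight.weaklyTight_restrict {B : Set Ω} (h : WeaklyNullTight p (μ.restrict B) X)
    {f : ℕ → Lp X p μ} (hf : WeakTendsto f atTop 0) :
    WeaklyTight (μ.restrict B) fun n => (f n : Ω → X) := by
  have weakTendsto_restrict := hf.map (LpToLpRestrictCLM Ω X ℝ μ p B)
  rw [map_zero] at weakTendsto_restrict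
  exact (h _ weakTendsto_restrict).congr fun n => LpToLpRestrictCLM_coeFn ℝ B (f n)

theorem weaklyTight_restrict_singleton [CompleteSpace X] [MeasurableSingletonClass Ω]
    [IsFiniteMeasure μ] {f : ℕ → Lp X 1 μ} (hf : WeakTendsto f atTop 0) (x : Ω) :
    WeaklyTight (μ.restrict {x}) fun n => (f n : Ω → X) := by
  rcases eq_or_ne (μ {x}) 0 with hx | hx
  · rw [Measure.restrict_eq_zero.2 hx]
    exact weaklyTight_zero _
  let evalAt : Lp X 1 μ →L[ℝ] X :=
    (μ.real {x})⁻¹ • (L1.integralCLM' ℝ).comp (LpToLpRestrictCLM Ω X ℝ μ 1 {x})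
  have evalAt_apply n : evalAt (f n) = f n x := by
    change (μ.real {x})⁻¹ • L1.integralCLM (LpToLpRestrictCLM Ω X ℝ μ 1 {x} (f n)) = f n x
    rw [← L1.integral_eq, L1.integral_eq_integral,
      integral_congr_ae (LpToLpRestrictCLM_coeFn ℝ {x} (f n)), integral_singleton,
      inv_smul_smul₀ ((measureReal_ne_zero_iff).2 hx)]
  have weakTendsto_value : WeakTendsto (fun n => f n x) atTop 0 := by
    simpa only [evalAt_apply, map_zero] using hf.map evalAt
  refine fun δ _ => ⟨_, weakTendsto_value.isWeaklyCompact_insert_range, fun n => ?_⟩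
  rw [Measure.restrict_singleton]
  simp

end WeaklyNullTight

section NullSequences

variable {p : ℝ≥0∞} [Fact (1 ≤ p)]

theorem IsRandomSigns.weaklyTight_of_smul {Θ : Type*} [MeasurableSpace Θ] {κ : Measure Θ}
    [IsProbabilityMeasure κ] {e : ℕ → Θ → ℝ} (he : IsRandomSigns κ e) {μ : Measure Ω} [SFinite μ]
    {v : ℕ → Ω → X} (hv : ∀ k, AEStronglyMeasurable (v k) μ)
    (h : WeaklyTight (κ.prod μ) fun k z => e k z.1 • v k z.2) : WeaklyTight μ v := by
  refine (weaklyTight_comp_measurePreserving_iff (measurePreserving_snd (μ := κ)) hv).1 ?_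
  intro δ hδ
  obtain ⟨W, hW, hWv⟩ := h δ hδ
  refine ⟨W ∪ (fun x => -x) '' W, hW.union (hW.image (-ContinuousLinearMap.id ℝ X)),
    fun k => (measure_mono ?_).trans (hWv k)⟩
  refine compl_subset_compl.2 fun z (hz : e k z.1 • v k z.2 ∈ W) => ?_
  rcases he.eq_or k z.1 with h1 | h1 <;> rw [h1] at hz
  · exact Or.inl (by simpa using hz)
  · exact Or.inr ⟨_, hz, by simp⟩

theorem WeaklyNullTight.one_of_prod {Θ : Type*} [MeasurableSpace Θ] {κ : Measure Θ}
    [IsProbabilityMeasure κ] {e : ℕ → Θ → ℝ} (he : IsRandomSigns κ e) {μ : Measure Ω}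
    [IsFiniteMeasure μ] (hp : p ≠ ∞) (h : WeaklyNullTight p (κ.prod μ) X) :
    WeaklyNullTight 1 μ X := by
  intro f hf
  obtain ⟨C, hC⟩ := hf.isRelWeaklyCompact_range.exists_norm_le
  refine weaklyTight_of_forall_cutoff (fun n => hC _ (mem_range_self n)) fun R _ => ?_
  obtain ⟨u, hu, coeFn_u⟩ := he.exists_weakTendsto_smul_indicator (κ := κ) hp
    (Metric.isClosed_closedBall (x := (0 : X)) (ε := R)) Metric.isBounded_closedBall hf
  exact he.weaklyTight_of_smul (fun k => (stronglyMeasurable_indicator_id_comp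
    Metric.isClosed_closedBall (Lp.stronglyMeasurable (f k))).aestronglyMeasurable)
    ((h u hu).congr coeFn_u)

/-- An atomless measure on `ℝ` realizes a variable with its own law together with independent
random signs. -/
theorem WeaklyNullTight.one_of_nullSingletonClass {ν : Measure ℝ} [IsFiniteMeasure ν]
    [NullSingletonClass ν] (hp : p ≠ ∞) (h : WeaklyNullTight p ν X) : WeaklyNullTight 1 ν X := by
  obtain ⟨κ, e, _, he⟩ := exists_isRandomSigns
  have mass_eq : ν univ = (κ.prod ν) univ := by
    rw [← univ_prod_univ, Measure.prod_prod, measure_univ (μ := κ), one_mul]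
  obtain ⟨Ψ, hΨ⟩ := exists_measurePreserving mass_eq
  exact (h.of_measurePreserving hΨ).one_of_prod he hp

theorem WeaklyNullTight.one_of_real [CompleteSpace X] {ν : Measure ℝ} [IsFiniteMeasure ν]
    (hp : p ≠ ∞) (h : WeaklyNullTight p ν X) : WeaklyNullTight 1 ν X := by
  intro f hf
  let atoms : Set ℝ := {x | 0 < ν {x}}
  have countable_atoms : atoms.Countable := Measure.countable_meas_pos_of_disjoint_iUnion
    (fun x => measurableSet_singleton x) fun x y hxy => disjoint_singleton.2 hxy
  have sum_atoms : ν.restrict atoms = Measure.sum fun x : atoms => ν.restrict {(x : ℝ)} := by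
    rw [← Measure.restrict_biUnion countable_atoms (fun x _ y _ hxy => disjoint_singleton.2 hxy)
      fun x => measurableSet_singleton x, biUnion_of_singleton]
  have tight_atoms : WeaklyTight (ν.restrict atoms) fun n => (f n : ℝ → X) := by
    have := countable_atoms.to_subtype
    have : IsFiniteMeasure (Measure.sum fun x : atoms => ν.restrict {(x : ℝ)}) :=
      sum_atoms ▸ inferInstance
    rw [sum_atoms]
    exact WeaklyTight.sum fun x => weaklyTight_restrict_singleton hf x
  have : NullSingletonClass (ν.restrict atomsᶜ) := ⟨fun x => by
    rw [Measure.restrict_apply (measurableSet_singleton x)]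
    by_cases hx : x ∈ atoms
    · rw [singleton_inter_eq_empty.2 (notMem_compl_iff.2 hx), measure_empty]
    · exact measure_mono_null inter_subset_left (by simpa [atoms] using hx)⟩
  have tight_compl := ((h.restrict countable_atoms.measurableSet.compl).one_of_nullSingletonClass
    hp).weaklyTight_restrict hf
  exact weaklyTight_of_restrict_of_restrict_compl countable_atoms.measurableSet tight_atoms
    tight_compl

theorem WeaklyNullTight.one [CompleteSpace X] {μ : Measure Ω} [IsFiniteMeasure μ] (hp : p ≠ ∞)
    (h : WeaklyNullTight p μ X) : WeaklyNullTight 1 μ X := by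
  intro f hf
  obtain ⟨F, hF, g, hg, hfg⟩ := exists_measurable_real_factorization fun n =>
    Lp.stronglyMeasurable (f n)
  have hFμ : MeasurePreserving F μ (μ.map F) := hF.measurePreserving μ
  exact ((h.of_measurePreserving hFμ).one_of_real hp).weaklyTight_of_comp hFμ hf hg hfg

end NullSequences

section RelWeaklyCompactTight

/-- Every relatively weakly compact set in `L^p(μ, X)` is weakly tight: the common form, for all
exponents `p`, of property (δSμ) and of its counterpart in `L^p`. -/
def RelWeaklyCompactTight (p : ℝ≥0∞) [Fact (1 ≤ p)] (μ : Measure Ω) (X : Type*)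
    [NormedAddCommGroup X] [NormedSpace ℝ X] : Prop :=
  ∀ K : Set (Lp X p μ), IsRelWeaklyCompact K →
    WeaklyTight μ fun f : K => ((f : Lp X p μ) : Ω → X)

variable {μ : Measure Ω} [IsFiniteMeasure μ] {p : ℝ≥0∞}

theorem WeaklyTight.of_sub [CompleteSpace X] {ι : Type*} {f : ι → Lp X p μ} {g : Lp X p μ}
    (h : WeaklyTight μ fun i => (f i - g : Lp X p μ)) :
    WeaklyTight μ fun i => (f i : Ω → X) := by
  refine (h.add (weaklyTight_of_stronglyMeasurable (Lp.stronglyMeasurable g))).congr fun i => ?_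
  filter_upwards [Lp.coeFn_sub (f i) g] with ω hω
  rw [Pi.add_apply, Pi.add_apply, hω, Pi.sub_apply, sub_add_cancel]

variable [Fact (1 ≤ p)]

theorem RelWeaklyCompactTight.weaklyNullTight {μ : Measure Ω}
    (h : RelWeaklyCompactTight p μ X) : WeaklyNullTight p μ X :=
  fun f hf => (h _ hf.isRelWeaklyCompact_range).comp fun n => (⟨f n, mem_range_self n⟩ : range f)

theorem WeaklyNullTight.exists_subseq_weaklyTight [CompleteSpace X] (h : WeaklyNullTight p μ X)
    {K : Set (Lp X p μ)} (hK : IsRelWeaklyCompact K) {u : ℕ → Lp X p μ} (hu : ∀ n, u n ∈ K) :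
    ∃ ψ : ℕ → ℕ, StrictMono ψ ∧ WeaklyTight μ fun n => (u (ψ n) : Ω → X) := by
  obtain ⟨ψ, hψ, z, hz⟩ := hK.exists_subseq hu
  have weakTendsto_sub := hz.sub_const z
  rw [sub_self] at weakTendsto_sub
  exact ⟨ψ, hψ, .of_sub (h _ weakTendsto_sub)⟩

theorem RelWeaklyCompactTight.weaklyTight_of_forall_exists_subseq [CompleteSpace X]
    (h : RelWeaklyCompactTight p μ X) (hp : p ≠ ∞)
    {K : Set (Lp X 1 μ)} {C : ℝ} (hC : ∀ f ∈ K, ‖f‖ ≤ C)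
    (hK : ∀ u : ℕ → Lp X 1 μ, (∀ n, u n ∈ K) →
      ∃ ψ : ℕ → ℕ, StrictMono ψ ∧ WeaklyTight μ fun n => (u (ψ n) : Ω → X)) :
    WeaklyTight μ fun f : K => ((f : Lp X 1 μ) : Ω → X) := by
  refine weaklyTight_of_forall_cutoff (fun f => hC f f.2) fun R hR => ?_
  have isClosed_ball : IsClosed (Metric.closedBall (0 : X) R) := Metric.isClosed_closedBall
  let cutoff : Lp X 1 μ → Lp X ∞ μ := lpCutoff isClosed_ball Metric.isBounded_closedBall
  have norm_cutoff_le : ∀ g ∈ cutoff '' K, ‖g‖ ≤ R := forall_mem_image.2 fun f _ =>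
    norm_lpCutoff_le _ _ (fun x hx => mem_closedBall_zero_iff.1 hx) hR.le f
  have isRelWeaklyCompact_cutoff :
      IsRelWeaklyCompact (lpInclusion le_top '' (cutoff '' K) : Set (Lp X p μ)) := by
    refine isRelWeaklyCompact_image_lpInclusion_top hp norm_cutoff_le fun u hu => ?_
    choose v hvK hvu using hu
    obtain ⟨ψ, hψ, hvψ⟩ := hK v hvK
    refine ⟨ψ, hψ, (hvψ.indicator_id_comp (Metric.closedBall 0 R)).congr fun n => ?_⟩
    rw [← hvu]
    exact (coeFn_lpCutoff _ _ _).symm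
  let inclusion_cutoff (f : K) : lpInclusion le_top '' (cutoff '' K) :=
    ⟨(lpInclusion le_top (cutoff f) : Lp X p μ), mem_image_of_mem _ (mem_image_of_mem _ f.2)⟩
  exact ((h _ isRelWeaklyCompact_cutoff).comp inclusion_cutoff).congr fun f =>
    coeFn_lpCutoff isClosed_ball Metric.isBounded_closedBall f.1

theorem RelWeaklyCompactTight.one [CompleteSpace X] (h : RelWeaklyCompactTight p μ X)
    (hp : p ≠ ∞) : RelWeaklyCompactTight 1 μ X := by
  intro K hK
  obtain ⟨C, hC⟩ := hK.exists_norm_le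
  exact h.weaklyTight_of_forall_exists_subseq hp hC fun u hu =>
    (h.weaklyNullTight.one hp).exists_subseq_weaklyTight hK hu

theorem RelWeaklyCompactTight.of_one (h : RelWeaklyCompactTight 1 μ X) :
    RelWeaklyCompactTight p μ X := fun K hK =>
  let inclusion : Lp X p μ →L[ℝ] Lp X 1 μ := lpInclusion Fact.out
  (h _ (hK.image inclusion)).comp fun f : K =>
    (⟨inclusion f, mem_image_of_mem _ f.2⟩ : inclusion '' K)

theorem relWeaklyCompactTight_one_iff [CompleteSpace X] (hp : p ≠ ∞) :
    RelWeaklyCompactTight 1 μ X ↔ RelWeaklyCompactTight p μ X :=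
  ⟨.of_one, fun h => h.one hp⟩

theorem deltaSProp_iff_relWeaklyCompactTight {μ : Measure Ω} [IsProbabilityMeasure μ] :
    DeltaSProp μ X ↔ RelWeaklyCompactTight 1 μ X :=
  forall₂_congr fun K hK => by
    rw [IsDeltaSSet, weaklyTight_coe_iff, and_iff_right hK.unifIntegrableSet]

end RelWeaklyCompactTight

theorem deltaSProp_iff_Lp_general (p : ℝ≥0∞) [Fact (1 ≤ p)] (hp : p < ∞)
    (μ : Measure Ω) [IsProbabilityMeasure μ] [CompleteSpace X] :
    DeltaSProp μ X ↔ ∀ K : Set (Lp X p μ), IsRelWeaklyCompact K →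
      ((∃ C : ℝ, ∀ f ∈ K, ‖f‖ ≤ C) ∧
        ∀ δ : ℝ, 0 < δ → ∃ W : Set X, IsWeaklyCompact W ∧
          ∀ f ∈ K, 1 - ENNReal.ofReal δ ≤ μ ((f : Ω → X) ⁻¹' W)) := by
  calc DeltaSProp μ X ↔ RelWeaklyCompactTight 1 μ X := deltaSProp_iff_relWeaklyCompactTight
    _ ↔ RelWeaklyCompactTight p μ X := relWeaklyCompactTight_one_iff hp.ne
    _ ↔ _ := forall₂_congr fun K hK => by
      rw [weaklyTight_coe_iff, and_iff_right hK.exists_norm_le]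

/-- For `1 < p < ∞`: `X` has property (δSμ) iff every relatively weakly compact subset of
`L^p(μ,X)` is a δS-set of `L^p(μ,X)` (i.e. is bounded and for every `δ > 0` there is a weakly
compact `W ⊆ X` with `μ (f ⁻¹' W) ≥ 1 - δ` for all its elements). -/
theorem deltaSProp_iff_Lp (p : ℝ≥0∞) [Fact (1 ≤ p)] (hp1 : 1 < p) (hp2 : p < ∞)
    (μ : Measure Ω) [IsProbabilityMeasure μ] [CompleteSpace X] :
    DeltaSProp μ X ↔ ∀ K : Set (Lp X p μ), IsRelWeaklyCompact K →
      ((∃ C : ℝ, ∀ f ∈ K, ‖f‖ ≤ C) ∧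
        ∀ δ : ℝ, 0 < δ → ∃ W : Set X, IsWeaklyCompact W ∧
          ∀ f ∈ K, 1 - ENNReal.ofReal δ ≤ μ ((f : Ω → X) ⁻¹' W)) :=
  deltaSProp_iff_Lp_general p hp2 μ
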